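/- Let 𝕄 = ⟨M, 𝒞⟩ be a countable transitive model of GB⁻ and let ℙ be a notion of class forcing for 𝕄 with the set decision property. Then ℙ satisfies the forcing theorem over 𝕄, and moreover ℙ adds no new sets: M[G] = M for every ℙ-generic filter G over 𝕄. -/

import Mathlib

noncomputable section

namespace CF

open scoped ZFSet

attribute [local instance] Classical.propDecidable

/-! ### First-order formulas of the language of set theory -/

/-- First-order `∈`-formulas with variables indexed by `ℕ`. -/
inductive EFormula : Type
  | mem : ℕ → ℕ → EFormula
  | eq : ℕ → ℕ → EFormula
  | not : EFormula → EFormula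
  | or : EFormula → EFormula → EFormula
  | ex : ℕ → EFormula → EFormula

/-- Satisfaction of an `∈`-formula in the structure `⟨D, ∈⟩` under assignment `v`. -/
def EFormula.Sat (D : Set ZFSet) (v : ℕ → ZFSet) : EFormula → Prop
  | .mem i j => v i ∈ v j
  | .eq i j => v i = v j
  | .not φ => ¬ EFormula.Sat D v φ
  | .or φ ψ => EFormula.Sat D v φ ∨ EFormula.Sat D v ψ
  | .ex i φ => ∃ x ∈ D, EFormula.Sat D (Function.update v i x) φ

/-- All variables occurring in the formula are `< m`. -/
def EFormula.VarsLt (m : ℕ) : EFormula → Prop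
  | .mem i j => i < m ∧ j < m
  | .eq i j => i < m ∧ j < m
  | .not φ => EFormula.VarsLt m φ
  | .or φ ψ => EFormula.VarsLt m φ ∧ EFormula.VarsLt m ψ
  | .ex i φ => i < m ∧ EFormula.VarsLt m φ

/-- First-order formulas of the two-sorted language of `GB⁻`: set variables indexed by `ℕ`,
class parameters indexed by `ℕ`, and only set quantifiers. -/
inductive GBFormula : Type
  | mem : ℕ → ℕ → GBFormula
  | eq : ℕ → ℕ → GBFormula
  | cls : ℕ → ℕ → GBFormula    -- `vᵢ ∈ C_j`
  | not : GBFormula → GBFormula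
  | or : GBFormula → GBFormula → GBFormula
  | ex : ℕ → GBFormula → GBFormula

/-- Satisfaction of a `GBFormula` with set quantifiers ranging over `Mset`,
class parameters `Cs` and set assignment `v`. -/
def GBFormula.Sat (Mset : Set ZFSet) (Cs : ℕ → Set ZFSet) (v : ℕ → ZFSet) : GBFormula → Prop
  | .mem i j => v i ∈ v j
  | .eq i j => v i = v j
  | .cls i j => v i ∈ Cs j
  | .not φ => ¬ GBFormula.Sat Mset Cs v φ
  | .or φ ψ => GBFormula.Sat Mset Cs v φ ∨ GBFormula.Sat Mset Cs v ψ
  | .ex i φ => ∃ x ∈ Mset, GBFormula.Sat Mset Cs (Function.update v i x) φ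

/-! ### Countable transitive models of GB⁻ -/

/-- A countable transitive second-order model `𝕄 = ⟨M, 𝒞⟩` of `GB⁻`:
`M` is transitive and countable, classes are subsets of `M`, sets are classes, and the axioms
of `GB⁻` hold (extensionality and foundation are automatic for `ZFSet`; the set axioms of `ZF⁻`
with separation and collection allowing class parameters, together with first-order class
comprehension, are listed). -/
structure GBModel.{u_1} where
  M : Set ZFSet.{u_1}
  Cls : Set (Set ZFSet)
  countable_M : M.Countable
  countable_Cls : Cls.Countable
  transitive : ∀ x ∈ M, ∀ y : ZFSet, y ∈ x → y ∈ M
  sets_are_classes : ∀ x ∈ M, x.toSet ∈ Cls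
  classes_sub : ∀ C ∈ Cls, C ⊆ M
  empty_mem : (∅ : ZFSet) ∈ M
  pair_mem : ∀ x ∈ M, ∀ y ∈ M, ({x, y} : ZFSet) ∈ M
  sUnion_mem : ∀ x ∈ M, (⋃₀ x : ZFSet) ∈ M
  omega_mem : ZFSet.omega ∈ M
  comprehension : ∀ (φ : GBFormula) (v : ℕ → ZFSet) (Cs : ℕ → Set ZFSet),
    (∀ n, v n ∈ M) → (∀ n, Cs n ∈ Cls) →
    {x : ZFSet | x ∈ M ∧ GBFormula.Sat M Cs (Function.update v 0 x) φ} ∈ Cls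
  separation : ∀ C ∈ Cls, ∀ a ∈ M, ∃ b ∈ M, ∀ x : ZFSet, x ∈ b ↔ x ∈ a ∧ x ∈ C
  collection : ∀ C ∈ Cls, ∀ a ∈ M,
    (∀ x : ZFSet, x ∈ a → ∃ y ∈ M, x.pair y ∈ C) →
    ∃ b ∈ M, ∀ x : ZFSet, x ∈ a → ∃ y : ZFSet, y ∈ b ∧ x.pair y ∈ C

/-- A notion of class forcing `ℙ = ⟨P, ≤_ℙ⟩` for `𝕄`: a partial order (with maximal element
`𝟙_ℙ`) whose domain and order relation are classes of `𝕄`. -/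
structure ClassForcing (𝕄 : GBModel) where
  P : Set ZFSet
  le : ZFSet → ZFSet → Prop
  one : ZFSet
  one_mem : one ∈ P
  le_one : ∀ p ∈ P, le p one
  le_refl : ∀ p ∈ P, le p p
  le_trans : ∀ p q r : ZFSet, le p q → le q r → le p r
  P_cls : P ∈ 𝕄.Cls
  le_cls : {x : ZFSet | ∃ p ∈ P, ∃ q ∈ P, le p q ∧ x = p.pair q} ∈ 𝕄.Cls

/-! ### Names and their evaluation -/

/-- Auxiliary rank-bounded version of `IsName`. -/
def IsNameAux (S : Set ZFSet) (o : Ordinal) (σ : ZFSet) : Prop :=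
  ∀ x ∈ σ.toSet, ∃ τ p : ZFSet, x = τ.pair p ∧ p ∈ S ∧
    ∃ _h : τ.rank < o, IsNameAux S τ.rank τ
termination_by o

/-- `σ` is a `ℙ`-name (for the forcing with conditions `S`): every element of `σ` is a pair
`⟨τ, p⟩` with `τ` a `ℙ`-name and `p ∈ S`. -/
def IsName (S : Set ZFSet) (σ : ZFSet) : Prop := IsNameAux S σ.rank σ

/-- Image of a ZFSet under an arbitrary function (using choice for definability). -/
def zimage (f : ZFSet → ZFSet) (x : ZFSet) : ZFSet :=
  @ZFSet.image f (Classical.allZFSetDefinable _) x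

/-- Auxiliary rank-bounded version of the evaluation `σ^G` of a name by a filter. -/
def nameEvalAux (G : Set ZFSet) (o : Ordinal) (σ : ZFSet) : ZFSet :=
  zimage (fun τ => if h : τ.rank < o then nameEvalAux G τ.rank τ else ∅)
    (ZFSet.sep (fun τ => ∃ p, p ∈ G ∧ τ.pair p ∈ σ) (⋃₀ ⋃₀ σ))
termination_by o
decreasing_by exact h

/-- The evaluation `σ^G = {τ^G | ∃ p ∈ G, ⟨τ, p⟩ ∈ σ}` of a name `σ` by a filter `G`. -/
def nameEval (G : Set ZFSet) (σ : ZFSet) : ZFSet := nameEvalAux G σ.rank σ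

/-- Auxiliary rank-bounded version of `nameTC`. -/
def nameTCAux (o : Ordinal) (σ : ZFSet) : Set ZFSet :=
  {x | ∃ τ p : ZFSet, τ.pair p ∈ σ ∧ (x = p ∨ ∃ _h : τ.rank < o, x ∈ nameTCAux τ.rank τ)}
termination_by o

/-- The set `tc(σ) = ⋃ {{p} ∪ tc(τ) | ⟨τ,p⟩ ∈ σ}` of conditions appearing in the transitive
closure of the name `σ`. -/
def nameTC (σ : ZFSet) : Set ZFSet := nameTCAux σ.rank σ

/-! ### Filters, genericity, generic extensions -/

/-- `G` is a filter on the partial order with domain `S` and ordering `le`. -/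
def IsFilterOn (S : Set ZFSet) (le : ZFSet → ZFSet → Prop) (G : Set ZFSet) : Prop :=
  G ⊆ S ∧ G.Nonempty ∧ (∀ p ∈ G, ∀ q ∈ S, le p q → q ∈ G) ∧
    ∀ p ∈ G, ∀ q ∈ G, ∃ r ∈ G, le r p ∧ le r q

/-- `D` is a dense subclass of the partial order `⟨S, le⟩`. -/
def DenseIn (S : Set ZFSet) (le : ZFSet → ZFSet → Prop) (D : Set ZFSet) : Prop :=
  D ⊆ S ∧ ∀ p ∈ S, ∃ q ∈ D, le q p

/-- `G` is a generic filter on `⟨S, le⟩` over `𝕄`: a filter meeting every dense subclass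
of `⟨S, le⟩` lying in `𝒞`. -/
def IsGeneric (𝕄 : GBModel) (S : Set ZFSet) (le : ZFSet → ZFSet → Prop) (G : Set ZFSet) : Prop :=
  IsFilterOn S le G ∧ ∀ D ∈ 𝕄.Cls, DenseIn S le D → (G ∩ D).Nonempty

/-- The generic extension `M[G] = {σ^G | σ ∈ M a name for the forcing with domain S}`. -/
def MGen (𝕄 : GBModel) (S : Set ZFSet) (G : Set ZFSet) : Set ZFSet :=
  {x | ∃ σ : ZFSet, σ ∈ 𝕄.M ∧ IsName S σ ∧ nameEval G σ = x}

/-! ### Compatibility, the set decision property -/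

/-- `p` and `q` are compatible in `⟨S, le⟩`. -/
def Compat (S : Set ZFSet) (le : ZFSet → ZFSet → Prop) (p q : ZFSet) : Prop :=
  ∃ r ∈ S, le r p ∧ le r q

/-- `p ≤* q` : every extension of `p` is compatible with `q`. -/
def leStar (S : Set ZFSet) (le : ZFSet → ZFSet → Prop) (p q : ZFSet) : Prop :=
  ∀ r ∈ S, le r p → Compat S le r q

/-- `p` decides the set of conditions `A`: for every `a ∈ A`, either `p ≤* a` or `p ⊥ a`. -/
def Decides (S : Set ZFSet) (le : ZFSet → ZFSet → Prop) (p A : ZFSet) : Prop :=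
  ∀ a : ZFSet, a ∈ A → leStar S le p a ∨ ¬ Compat S le p a

/-- The set decision property: every set of conditions in `M` is decided densely. -/
def SetDecisionProperty (𝕄 : GBModel) (F : ClassForcing 𝕄) : Prop :=
  ∀ p ∈ F.P, ∀ A : ZFSet, A ∈ 𝕄.M → (∀ a : ZFSet, a ∈ A → a ∈ F.P) →
    ∃ q ∈ F.P, F.le q p ∧ Decides F.P F.le q A

/-! ### The forcing theorem -/

/-- Encode a finite list of sets as a single set by iterated Kuratowski pairing. -/
def listEncode : List ZFSet → ZFSet
  | [] => ∅
  | a :: l => a.pair (listEncode l)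

/-- The assignment sending variable `n < m` to `σₙ^G` (and `∅` beyond `m`). -/
def namesAssign (G : Set ZFSet) (m : ℕ) (σs : Fin m → ZFSet) : ℕ → ZFSet :=
  fun n => if h : n < m then nameEval G (σs ⟨n, h⟩) else ∅

/-- `p ⊩_ℙ φ(σ₀, …, σ_{m-1})` : for every generic `G ∋ p`, `M[G] ⊨ φ(σ₀^G, …, σ_{m-1}^G)`. -/
def Forces (𝕄 : GBModel) (F : ClassForcing 𝕄) (φ : EFormula) (m : ℕ) (p : ZFSet)
    (σs : Fin m → ZFSet) : Prop :=
  ∀ G : Set ZFSet, IsGeneric 𝕄 F.P F.le G → p ∈ G →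
    EFormula.Sat (MGen 𝕄 F.P G) (namesAssign G m σs) φ

/-- `ℙ` satisfies the forcing theorem over `𝕄`: for every `∈`-formula `φ(v₀,…,v_{m-1})`,
the forcing relation is a class of `𝕄` (definability lemma) and everything true in a generic
extension is forced by a condition in the generic filter (truth lemma). -/
def SatisfiesForcingTheorem (𝕄 : GBModel) (F : ClassForcing 𝕄) : Prop :=
  ∀ (φ : EFormula) (m : ℕ), EFormula.VarsLt m φ →
    ({x : ZFSet | ∃ p ∈ F.P, ∃ σs : Fin m → ZFSet,
        (∀ i, σs i ∈ 𝕄.M ∧ IsName F.P (σs i)) ∧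
        Forces 𝕄 F φ m p σs ∧
        x = p.pair (listEncode (List.ofFn σs))} ∈ 𝕄.Cls) ∧
    ∀ σs : Fin m → ZFSet, (∀ i, σs i ∈ 𝕄.M ∧ IsName F.P (σs i)) →
      ∀ G : Set ZFSet, IsGeneric 𝕄 F.P F.le G →
        EFormula.Sat (MGen 𝕄 F.P G) (namesAssign G m σs) φ →
        ∃ p ∈ G, Forces 𝕄 F φ m p σs

/-! ### Complete subforcings, the set reduction property -/

/-- `A` is an antichain of the partial order `⟨S, le⟩`. -/
def IsAntichainIn (S : Set ZFSet) (le : ZFSet → ZFSet → Prop) (A : Set ZFSet) : Prop :=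
  A ⊆ S ∧ ∀ p ∈ A, ∀ q ∈ A, p ≠ q → ¬ Compat S le p q

/-- `A` is a maximal antichain of the partial order `⟨S, le⟩`. -/
def IsMaxAntichainIn (S : Set ZFSet) (le : ZFSet → ZFSet → Prop) (A : Set ZFSet) : Prop :=
  IsAntichainIn S le A ∧ ∀ p ∈ S, ∃ a ∈ A, Compat S le p a

/-- `ℚ ⊲∘ ℙ` : `Q` is a set-sized complete subforcing of `ℙ` (with the induced ordering):
`Q ∈ M`, `Q ⊆ P`, `𝟙 ∈ Q`, and every maximal antichain of `ℚ` in `M` is predense in `ℙ`. -/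
def IsCompleteSub (𝕄 : GBModel) (F : ClassForcing 𝕄) (Q : ZFSet) : Prop :=
  Q ∈ 𝕄.M ∧ Q.toSet ⊆ F.P ∧ F.one ∈ Q ∧
    ∀ A : ZFSet, A ∈ 𝕄.M → A.toSet ⊆ Q.toSet → IsMaxAntichainIn Q.toSet F.le A.toSet →
      ∀ p ∈ F.P, ∃ a : ZFSet, a ∈ A ∧ Compat F.P F.le p a

/-- `ℚ^{∥q}` : the conditions of `Q` compatible with `q` in `ℙ`. -/
def QPar (𝕄 : GBModel) (F : ClassForcing 𝕄) (Q : ZFSet) (q : ZFSet) : Set ZFSet :=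
  {r | r ∈ Q ∧ Compat F.P F.le r q}

/-- The property `(*)(A, q, ℚ)`: for every `a ∈ A`, the set of `r ∈ ℚ^{∥q}` such that either
all `s ≤ q, r` satisfy `s ≤* a`, or all `s ≤ q, r` satisfy `s ⊥ a`, is dense in `ℚ^{∥q}`. -/
def StarProp (𝕄 : GBModel) (F : ClassForcing 𝕄) (A q Q : ZFSet) : Prop :=
  ∀ a : ZFSet, a ∈ A → ∀ r₀ ∈ QPar 𝕄 F Q q, ∃ r₁ ∈ QPar 𝕄 F Q q, F.le r₁ r₀ ∧
    ((∀ s ∈ F.P, F.le s q → F.le s r₁ → leStar F.P F.le s a) ∨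
      (∀ s ∈ F.P, F.le s q → F.le s r₁ → ¬ Compat F.P F.le s a))

/-- The set reduction property. -/
def SetReductionProperty (𝕄 : GBModel) (F : ClassForcing 𝕄) : Prop :=
  ∀ A : ZFSet, A ∈ 𝕄.M → (∀ a : ZFSet, a ∈ A → a ∈ F.P) →
    ∀ p ∈ F.P, ∃ q ∈ F.P, F.le q p ∧ ∃ Q : ZFSet, IsCompleteSub 𝕄 F Q ∧ StarProp 𝕄 F A q Q

/-- Every new set added by `ℙ` is added by a set-sized complete subforcing of `ℙ`. -/
def EveryNewSetBySub (𝕄 : GBModel) (F : ClassForcing 𝕄) : Prop :=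
  ∀ G : Set ZFSet, IsGeneric 𝕄 F.P F.le G →
    ∀ x : ZFSet, x ∈ MGen 𝕄 F.P G → x ∉ 𝕄.M →
      ∃ Q : ZFSet, IsCompleteSub 𝕄 F Q ∧ x ∈ MGen 𝕄 Q.toSet (G ∩ Q.toSet)

/-! ### The q-reduction of a name -/

/-- First component of a Kuratowski pair (junk value `∅` otherwise). -/
def fstZ (x : ZFSet) : ZFSet :=
  if h : ∃ a b : ZFSet, x = a.pair b then h.choose else ∅

/-- Second component of a Kuratowski pair (junk value `∅` otherwise). -/
def sndZ (x : ZFSet) : ZFSet :=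
  if h : ∃ a b : ZFSet, x = a.pair b then h.choose_spec.choose else ∅

/-- Cartesian product of two `ZFSet`s. -/
def zprod (a b : ZFSet) : ZFSet :=
  ZFSet.sep (fun x => ∃ u v : ZFSet, u ∈ a ∧ v ∈ b ∧ x = u.pair v)
    (ZFSet.powerset (ZFSet.powerset (a ∪ b)))

/-- Auxiliary rank-bounded version of the `q`-reduction of a name to `Q`. -/
def reduceAux (S : Set ZFSet) (le : ZFSet → ZFSet → Prop) (Q q : ZFSet) (o : Ordinal)
    (σ : ZFSet) : ZFSet :=
  zimage
    (fun x =>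
      (if h : (fstZ x).rank < o then reduceAux S le Q q (fstZ x).rank (fstZ x) else ∅).pair
        (sndZ x))
    (ZFSet.sep
      (fun x => ∃ τ r : ZFSet, x = τ.pair r ∧ r ∈ Q ∧
        ∃ a : ZFSet, τ.pair a ∈ σ ∧ ∀ s ∈ S, le s q → le s r → leStar S le s a)
      (zprod (⋃₀ ⋃₀ σ) Q))
termination_by o
decreasing_by exact h

/-- The `q`-reduction `σ_q^ℚ = {⟨τ_q^ℚ, r⟩ | r ∈ ℚ ∧ ∃a (⟨τ,a⟩ ∈ σ ∧ ∀ s ≤ q,r (s ≤* a))}`. -/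
def reduceName (S : Set ZFSet) (le : ZFSet → ZFSet → Prop) (Q q σ : ZFSet) : ZFSet :=
  reduceAux S le Q q σ.rank σ

/-! ### Projections -/

/-- `f` is a projection from `⟨S, le⟩` (with maximum `one`) onto the subforcing with domain
`Qs`, respecting `X`. -/
def IsProjectionResp (S : Set ZFSet) (le : ZFSet → ZFSet → Prop) (one : ZFSet)
    (Qs X : Set ZFSet) (f : ZFSet → ZFSet) : Prop :=
  (∀ p ∈ S, f p ∈ Qs) ∧
  f one = one ∧
  (∀ p ∈ S, ∀ q ∈ S, le p q → le (f p) (f q)) ∧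
  (∀ p ∈ S, ∀ q ∈ Qs, le q (f p) → ∃ r ∈ S, le r p ∧ le (f r) q) ∧
  (∀ p ∈ X, ∀ q ∈ S, le (f q) p → le q p) ∧
  (∀ p ∈ X, f p = p)

/-- `ℙ` is approachable by projections: there is a class `Π ∈ 𝒞` whose sections `π_{X,y}`
are such that for every set `X ⊆ ℙ` there are a set `y` and a set-sized subforcing `ℚ ⊇ X ∪ {𝟙}`
of `ℙ` with `π_{X,y} : ℙ → ℚ` a projection respecting `X`. -/
def ApproachableByProjections (𝕄 : GBModel) (F : ClassForcing 𝕄) : Prop :=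
  ∃ Pi ∈ 𝕄.Cls, ∀ X : ZFSet, X ∈ 𝕄.M → (∀ x : ZFSet, x ∈ X → x ∈ F.P) →
    ∃ y ∈ 𝕄.M, ∃ Q : ZFSet, Q ∈ 𝕄.M ∧ Q.toSet ⊆ F.P ∧ (∀ x : ZFSet, x ∈ X → x ∈ Q) ∧
      F.one ∈ Q ∧ ∃ f : ZFSet → ZFSet,
        (∀ u ∈ F.P, ∀ v : ZFSet, (f u = v ↔ X.pair (y.pair (u.pair v)) ∈ Pi)) ∧
        IsProjectionResp F.P F.le F.one Q.toSet X.toSet f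

/-- `p ⊩ σ ⊆ τ` for the forcing with domain `S` and ordering `le`. -/
def ForcesSubset (𝕄 : GBModel) (S : Set ZFSet) (le : ZFSet → ZFSet → Prop)
    (p σ τ : ZFSet) : Prop :=
  ∀ G : Set ZFSet, IsGeneric 𝕄 S le G → p ∈ G → nameEval G σ ⊆ nameEval G τ

/-! ### Bounded names, turning proper classes into sets -/

/-- The possible values of the name `σ` in generic extensions. -/
def PossibleValues (𝕄 : GBModel) (S : Set ZFSet) (le : ZFSet → ZFSet → Prop)
    (σ : ZFSet) : Set ZFSet :=
  {x | ∃ G : Set ZFSet, IsGeneric 𝕄 S le G ∧ nameEval G σ = x}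

/-- The name `σ` is bounded: some `A ∈ M` covers all its possible values lying in `M`. -/
def IsBoundedName (𝕄 : GBModel) (F : ClassForcing 𝕄) (σ : ZFSet) : Prop :=
  ∃ A ∈ 𝕄.M, PossibleValues 𝕄 F.P F.le σ ∩ 𝕄.M ⊆ A.toSet

/-- `ℙ` has bounded names: every `ℙ`-name in `M` is bounded. -/
def HasBoundedNames (𝕄 : GBModel) (F : ClassForcing 𝕄) : Prop :=
  ∀ σ : ZFSet, σ ∈ 𝕄.M → IsName F.P σ → IsBoundedName 𝕄 F σ

/-- `X` is a proper class of `𝕄`: a class of `𝕄` that is not (the extension of) a set of `𝕄`. -/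
def IsProperClass (𝕄 : GBModel) (X : Set ZFSet) : Prop :=
  X ∈ 𝕄.Cls ∧ ¬ ∃ x ∈ 𝕄.M, x.toSet = X

/-- The proper class `X` of `𝕄` is turned into a set by forcing with `ℙ`: some `ℙ`-name in `M`
evaluates to `X` under some generic filter. -/
def TurnsIntoSet (𝕄 : GBModel) (F : ClassForcing 𝕄) (X : Set ZFSet) : Prop :=
  ∃ σ : ZFSet, σ ∈ 𝕄.M ∧ IsName F.P σ ∧
    ∃ G : Set ZFSet, IsGeneric 𝕄 F.P F.le G ∧ (nameEval G σ).toSet = X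

/-! ### Functions and partial functions as sets, collapse forcings -/

/-- `p` is a partial function from (a subset of) `γ` into the class `Y`. -/
def IsPFunOn (p γ : ZFSet) (Y : Set ZFSet) : Prop :=
  (∀ x : ZFSet, x ∈ p → ∃ a b : ZFSet, x = a.pair b ∧ a ∈ γ ∧ b ∈ Y) ∧
  ∀ a b b' : ZFSet, a.pair b ∈ p → a.pair b' ∈ p → b = b'

/-- The domain of a set of pairs. -/
def pdom (p : ZFSet) : Set ZFSet := {a | ∃ b : ZFSet, a.pair b ∈ p}

/-- `f` is (the graph of) an injective function from `X` into `Y`. -/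
def ZInjFun (f : ZFSet) (X Y : Set ZFSet) : Prop :=
  (∀ x : ZFSet, x ∈ f → ∃ a b : ZFSet, x = a.pair b ∧ a ∈ X ∧ b ∈ Y) ∧
  (∀ a b b' : ZFSet, a.pair b ∈ f → a.pair b' ∈ f → b = b') ∧
  (∀ a ∈ X, ∃ b : ZFSet, a.pair b ∈ f) ∧
  (∀ a a' b : ZFSet, a.pair b ∈ f → a'.pair b ∈ f → a = a')

/-- `D` has size less than the cardinality of `γ` in the sense of `M`:
no function of `M` injects `γ` into `D`. -/
def SmallerThan (𝕄 : GBModel) (γ : ZFSet) (D : Set ZFSet) : Prop :=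
  ¬ ∃ f ∈ 𝕄.M, ZInjFun f γ.toSet D

/-- Conditions of `Col(γ, Y)^M`: partial functions of `M` from `γ` to `Y` whose domain has
size less than the cardinality of `γ` in `M`. -/
def ColCond (𝕄 : GBModel) (γ : ZFSet) (Y : Set ZFSet) (p : ZFSet) : Prop :=
  p ∈ 𝕄.M ∧ IsPFunOn p γ Y ∧ SmallerThan 𝕄 γ (pdom p)

/-- Conditions of `Col₋*(γ, Y)^M`: those conditions of `Col(γ, Y)^M` whose domain is
an ordinal. -/
def ColStarCond (𝕄 : GBModel) (γ : ZFSet) (Y : Set ZFSet) (p : ZFSet) : Prop :=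
  ColCond 𝕄 γ Y p ∧ ∃ β : ZFSet, β.IsOrdinal ∧ pdom p = β.toSet

/-- `f` is (the graph of) a function with domain `I`. -/
def ZFuncOn (f I : ZFSet) : Prop :=
  (∀ x : ZFSet, x ∈ f → ∃ a b : ZFSet, x = a.pair b ∧ a ∈ I) ∧
  (∀ a b b' : ZFSet, a.pair b ∈ f → a.pair b' ∈ f → b = b') ∧
  (∀ a : ZFSet, a ∈ I → ∃ b : ZFSet, a.pair b ∈ f)

/-- Application of a set-function to an argument (junk value `∅` if undefined). -/
def zapp (f i : ZFSet) : ZFSet :=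
  if h : ∃ b : ZFSet, i.pair b ∈ f then h.choose else ∅

/-! ### Pretameness -/

/-- `ℙ` is pretame for `𝕄`: for every `p ∈ ℙ`, `I ∈ M` and every `𝒞`-coded sequence
`⟨D_i | i ∈ I⟩` (coded as the class of pairs `⟨i, x⟩` with `x ∈ D_i`) of dense subclasses
of `ℙ`, there are `q ≤ p` and `⟨d_i | i ∈ I⟩ ∈ M` with `d_i ⊆ D_i` predense below `q`. -/
def Pretame (𝕄 : GBModel) (F : ClassForcing 𝕄) : Prop :=
  ∀ p ∈ F.P, ∀ I : ZFSet, I ∈ 𝕄.M → ∀ D ∈ 𝕄.Cls,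
    (∀ i : ZFSet, i ∈ I →
      (∀ x : ZFSet, i.pair x ∈ D → x ∈ F.P) ∧ ∀ r ∈ F.P, ∃ s : ZFSet, i.pair s ∈ D ∧ F.le s r) →
    ∃ q ∈ F.P, F.le q p ∧ ∃ d ∈ 𝕄.M, ZFuncOn d I ∧
      ∀ i : ZFSet, i ∈ I → (∀ x : ZFSet, x ∈ zapp d i → i.pair x ∈ D) ∧
        ∀ r ∈ F.P, F.le r q → ∃ a : ZFSet, a ∈ zapp d i ∧ Compat F.P F.le r a

/-! ### The specific forcings of Sections 6 and 7 -/

/-- Conditions of Definition 6.8: (not necessarily finite) partial functions from `ω` to `2`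
lying in `M`. -/
def PCond (𝕄 : GBModel) (p : ZFSet) : Prop :=
  p ∈ 𝕄.M ∧ IsPFunOn p ZFSet.omega {x : ZFSet | x = ∅ ∨ x = ({∅} : ZFSet)}

/-- Conditions of the finite support product `ℚ` of `ω` many copies of `ℙ`:
finite sequences `⟨p₀, …, p_k⟩` of `ℙ`-conditions. -/
def QCond (𝕄 : GBModel) (s : ZFSet) : Prop :=
  s ∈ 𝕄.M ∧ ∃ n : ZFSet, n ∈ ZFSet.omega ∧ ZFuncOn s n ∧
    ∀ i : ZFSet, i ∈ n → PCond 𝕄 (zapp s i)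

/-- The coordinatewise ordering on `ℚ`. -/
def QLe (s' s : ZFSet) : Prop :=
  pdom s ⊆ pdom s' ∧ ∀ i ∈ pdom s, zapp s i ⊆ zapp s' i

/-- The power class `𝒫(ω)^M`. -/
def PowOmega (𝕄 : GBModel) : Set ZFSet :=
  {x : ZFSet | x ∈ 𝕄.M ∧ x ⊆ ZFSet.omega}

/-- `X ⊆ M` is definable over `⟨M, ∈⟩` (from set parameters). -/
def DefinableOver (Mset : Set ZFSet) (X : Set ZFSet) : Prop :=
  ∃ (φ : EFormula) (v : ℕ → ZFSet), (∀ n, v n ∈ Mset) ∧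
    X = {x : ZFSet | x ∈ Mset ∧ EFormula.Sat Mset (Function.update v 0 x) φ}

/-- Every set of `M` is countable in `M`: it injects into `ω` by a function of `M`. -/
def AllSetsCountable (𝕄 : GBModel) : Prop :=
  ∀ x ∈ 𝕄.M, ∃ f ∈ 𝕄.M, ZInjFun f x.toSet ZFSet.omega.toSet

/-!
By the set decision property, every generic filter `G` contains, for each name `σ ∈ M`, a condition
`q` that decides all conditions lying in a transitive set of `M` around `σ`. On those conditions
`G` agrees with the class `{a | q ≤* a}`, so `σ^G` is the evaluation of `σ` by that class. The
class is definable in `𝕄`, hence the evaluation can be computed by recursion inside `𝕄`; thus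
`σ^G ∈ M`, and check names give `M[G] = M`. Consequently `p ⊩ φ(σ⃗)` holds iff `M ⊨ φ`, evaluated
at these values of `σ⃗`, for every `q ≤ p` deciding `σ⃗`. The right-hand side is definable, and
the truth lemma follows because some `q ∈ G` decides `σ⃗`.

Definability over `𝕄` is treated semantically, as a property of relations on sets that is closed
under connectives, quantifiers over `M` and substitution of definable functions.
-/

universe u

/-! ### Definability over a model of GB⁻ -/

namespace GBModel

variable (𝕄 : GBModel.{u})

theorem exists_classSeq : ∃ Cs : ℕ → Set ZFSet.{u}, 𝕄.Cls = Set.range Cs :=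
  𝕄.countable_Cls.exists_eq_range ⟨_, 𝕄.sets_are_classes ∅ 𝕄.empty_mem⟩

/-- An enumeration of the classes of `𝕄`. Interpreting all class parameters by this one sequence
makes any two formulas share their parameters. -/
def classSeq : ℕ → Set ZFSet.{u} := 𝕄.exists_classSeq.choose

theorem range_classSeq : Set.range 𝕄.classSeq = 𝕄.Cls := 𝕄.exists_classSeq.choose_spec.symm

theorem classSeq_mem (n : ℕ) : 𝕄.classSeq n ∈ 𝕄.Cls := 𝕄.range_classSeq ▸ Set.mem_range_self n

variable {𝕄} {x y a : ZFSet.{u}}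

theorem mem_of_mem (ha : a ∈ 𝕄.M) (hx : x ∈ a) : x ∈ 𝕄.M := 𝕄.transitive a ha x hx

theorem singleton_mem (hx : x ∈ 𝕄.M) : ({x} : ZFSet) ∈ 𝕄.M := by
  simpa only [ZFSet.pair_eq_singleton] using 𝕄.pair_mem x hx x hx

theorem union_mem (hx : x ∈ 𝕄.M) (hy : y ∈ 𝕄.M) : x ∪ y ∈ 𝕄.M :=
  𝕄.sUnion_mem _ (𝕄.pair_mem x hx y hy)

theorem opair_mem (hx : x ∈ 𝕄.M) (hy : y ∈ 𝕄.M) : x.pair y ∈ 𝕄.M :=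
  𝕄.pair_mem _ (singleton_mem hx) _ (𝕄.pair_mem x hx y hy)

theorem of_opair_mem (h : x.pair y ∈ 𝕄.M) : x ∈ 𝕄.M ∧ y ∈ 𝕄.M := by
  have h_upair : ({x, y} : ZFSet) ∈ 𝕄.M := mem_of_mem h (by simp [ZFSet.pair])
  exact ⟨mem_of_mem h_upair (by simp), mem_of_mem h_upair (by simp)⟩

theorem update_mem {v : ℕ → ZFSet.{u}} (hv : ∀ i, v i ∈ 𝕄.M) (hx : x ∈ 𝕄.M) (n : ℕ) :
    ∀ i, Function.update v n x i ∈ 𝕄.M :=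
  (Function.forall_update_iff v (p := fun _ y => y ∈ 𝕄.M)).2 ⟨hx, fun i _ => hv i⟩

end GBModel

section Definability

variable (𝕄 : GBModel.{u}) {α β : Type}

/-- The relation `R` on families of sets is first-order definable over `𝕄` from class parameters.
Asking for a formula for every assignment `f` of numbered variables to the indices makes
definability stable under renaming variables, and the bound `m` leaves fresh variables for
quantifiers. -/
def Definable (R : (α → ZFSet.{u}) → Prop) : Prop :=
  ∀ (m : ℕ) (f : α → Fin m), ∃ φ : GBFormula, ∀ v : ℕ → ZFSet.{u}, (∀ i, v i ∈ 𝕄.M) →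
    (φ.Sat 𝕄.M 𝕄.classSeq v ↔ R fun a => v (f a))

/-- The operation `t` on families of sets maps `M` to `M` and has a definable graph. In the graph,
as in every extended context `Option α` below, the new variable is `none`. -/
structure DefinableFun (t : (α → ZFSet.{u}) → ZFSet.{u}) : Prop where
  mem_model : ∀ v, (∀ a, v a ∈ 𝕄.M) → t v ∈ 𝕄.M
  definable_graph :
    Definable 𝕄 fun w : Option α → ZFSet.{u} => w none = t fun a => w (some a)

/-- A definable unary predicate on sets. -/
abbrev DefinablePred (R : ZFSet.{u} → Prop) : Prop :=
  Definable 𝕄 fun w : Unit → ZFSet.{u} => R (w ())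

/-- A definable binary relation between sets. -/
abbrev DefinableRel (R : ZFSet.{u} → ZFSet.{u} → Prop) : Prop :=
  Definable 𝕄 fun w : Fin 2 → ZFSet.{u} => R (w 0) (w 1)

variable {𝕄} {R S : (α → ZFSet.{u}) → Prop} {s t : (α → ZFSet.{u}) → ZFSet.{u}}

namespace Definable

theorem congr (hR : Definable 𝕄 R) (h : ∀ v, (∀ a, v a ∈ 𝕄.M) → (R v ↔ S v)) :
    Definable 𝕄 S := fun m f => by
  obtain ⟨φ, hφ⟩ := hR m f
  exact ⟨φ, fun v hv => (hφ v hv).trans (h _ fun a => hv _)⟩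

theorem reindex (hR : Definable 𝕄 R) (g : α → β) :
    Definable 𝕄 fun w : β → ZFSet.{u} => R fun a => w (g a) :=
  fun m f => hR m (f ∘ g)

protected theorem not (hR : Definable 𝕄 R) : Definable 𝕄 fun v => ¬ R v := fun m f => by
  obtain ⟨φ, hφ⟩ := hR m f
  exact ⟨φ.not, fun v hv => not_congr (hφ v hv)⟩

protected theorem or (hR : Definable 𝕄 R) (hS : Definable 𝕄 S) :
    Definable 𝕄 fun v => R v ∨ S v := fun m f => by
  obtain ⟨φ, hφ⟩ := hR m f
  obtain ⟨ψ, hψ⟩ := hS m f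
  exact ⟨φ.or ψ, fun v hv => or_congr (hφ v hv) (hψ v hv)⟩

protected theorem and (hR : Definable 𝕄 R) (hS : Definable 𝕄 S) :
    Definable 𝕄 fun v => R v ∧ S v :=
  (hR.not.or hS.not).not.congr fun v _ => by tauto

protected theorem imp (hR : Definable 𝕄 R) (hS : Definable 𝕄 S) :
    Definable 𝕄 fun v => R v → S v :=
  (hR.not.or hS).congr fun v _ => by tauto

protected theorem iff (hR : Definable 𝕄 R) (hS : Definable 𝕄 S) :
    Definable 𝕄 fun v => R v ↔ S v :=
  ((hR.imp hS).and (hS.imp hR)).congr fun v _ => by tauto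

theorem exists_mem_model {R : (α → ZFSet.{u}) → ZFSet.{u} → Prop}
    (hR : Definable 𝕄 fun w : Option α → ZFSet.{u} => R (fun a => w (some a)) (w none)) :
    Definable 𝕄 fun v => ∃ x ∈ 𝕄.M, R v x := fun m f => by
  obtain ⟨φ, hφ⟩ := hR (m + 1) fun o => o.elim (Fin.last m) fun a => (f a).castSucc
  refine ⟨φ.ex m, fun v hv => exists_congr fun x => and_congr_right fun hx => ?_⟩
  simpa [Function.update_of_ne (f _).isLt.ne] using hφ _ (GBModel.update_mem hv hx m)

theorem forall_mem_model {R : (α → ZFSet.{u}) → ZFSet.{u} → Prop}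
    (hR : Definable 𝕄 fun w : Option α → ZFSet.{u} => R (fun a => w (some a)) (w none)) :
    Definable 𝕄 fun v => ∀ x ∈ 𝕄.M, R v x :=
  (exists_mem_model (R := fun v x => ¬ R v x) hR.not).not.congr fun v _ => by push Not; rfl

theorem mem_var (a b : α) : Definable 𝕄 fun v => v a ∈ v b :=
  fun _ f => ⟨.mem (f a) (f b), fun _ _ => Iff.rfl⟩

theorem eq_var (a b : α) : Definable 𝕄 fun v => v a = v b :=
  fun _ f => ⟨.eq (f a) (f b), fun _ _ => Iff.rfl⟩

theorem var_mem_class {C : Set ZFSet.{u}} (hC : C ∈ 𝕄.Cls) (a : α) :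
    Definable 𝕄 fun v => v a ∈ C := fun _ f => by
  obtain ⟨n, rfl⟩ := 𝕄.range_classSeq ▸ hC
  exact ⟨.cls (f a) n, fun _ _ => Iff.rfl⟩

theorem subst {R : (α → ZFSet.{u}) → ZFSet.{u} → Prop}
    (hR : Definable 𝕄 fun w : Option α → ZFSet.{u} => R (fun a => w (some a)) (w none))
    (ht : DefinableFun 𝕄 t) : Definable 𝕄 fun v => R v (t v) :=
  (exists_mem_model (R := fun v x => x = t v ∧ R v x) (ht.definable_graph.and hR)).congr fun v hv =>
    ⟨fun ⟨_, _, hx, hxR⟩ => hx ▸ hxR, fun h => ⟨_, ht.mem_model v hv, rfl, h⟩⟩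

end Definable

namespace DefinableFun

theorem var (a : α) : DefinableFun 𝕄 fun v => v a :=
  ⟨fun _ hv => hv a, .eq_var none (some a)⟩

theorem reindex (ht : DefinableFun 𝕄 t) (g : α → β) :
    DefinableFun 𝕄 fun w : β → ZFSet.{u} => t fun a => w (g a) :=
  ⟨fun _ hw => ht.mem_model _ fun a => hw (g a), ht.definable_graph.reindex (Option.map g)⟩

theorem lift (ht : DefinableFun 𝕄 t) :
    DefinableFun 𝕄 fun w : Option α → ZFSet.{u} => t fun a => w (some a) :=
  ht.reindex some

end DefinableFun

namespace Definable

theorem eq (hs : DefinableFun 𝕄 s) (ht : DefinableFun 𝕄 t) : Definable 𝕄 fun v => s v = t v :=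
  subst (R := fun v x => x = t v) ht.definable_graph hs

theorem mem_class {C : Set ZFSet.{u}} (hC : C ∈ 𝕄.Cls) (ht : DefinableFun 𝕄 t) :
    Definable 𝕄 fun v => t v ∈ C :=
  (var_mem_class hC none).subst ht

end Definable

theorem DefinablePred.comp {R : ZFSet.{u} → Prop} (hR : DefinablePred 𝕄 R)
    (ht : DefinableFun 𝕄 t) : Definable 𝕄 fun v => R (t v) :=
  (hR.reindex fun _ => none).subst ht

theorem DefinableRel.comp {R : ZFSet.{u} → ZFSet.{u} → Prop} (hR : DefinableRel 𝕄 R)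
    (hs : DefinableFun 𝕄 s) (ht : DefinableFun 𝕄 t) : Definable 𝕄 fun v => R (s v) (t v) :=
  have h_left : Definable 𝕄 fun w : Option α → ZFSet.{u} => R (s fun a => w (some a)) (w none) :=
    .subst (R := fun w x => R x (w none)) (hR.reindex ![none, some none]) hs.lift
  h_left.subst ht

theorem Definable.mem (hs : DefinableFun 𝕄 s) (ht : DefinableFun 𝕄 t) :
    Definable 𝕄 fun v => s v ∈ t v :=
  DefinableRel.comp (R := fun x y => x ∈ y) (.mem_var 0 1) hs ht

namespace DefinableFun

theorem of_definable_mem (ht : ∀ v, (∀ a, v a ∈ 𝕄.M) → t v ∈ 𝕄.M)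
    (h : Definable 𝕄 fun w : Option α → ZFSet.{u} => w none ∈ t fun a => w (some a)) :
    DefinableFun 𝕄 t where
  mem_model := ht
  definable_graph := by
    have h_ext : Definable 𝕄 fun w : Option α → ZFSet.{u} =>
        ∀ x ∈ 𝕄.M, (x ∈ w none ↔ x ∈ t fun a => w (some a)) :=
      .forall_mem_model ((Definable.mem (.var none) (.var (some none))).iff
        (h.reindex fun o => o.elim none fun a => some (some a)))
    refine h_ext.congr fun w hw => ?_
    have h_model : ∀ {x y}, x ∈ y → y ∈ 𝕄.M → x ∈ 𝕄.M := fun hx hy => GBModel.mem_of_mem hy hx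
    refine ⟨fun h => ZFSet.ext fun x => ⟨fun hx => ?_, fun hx => ?_⟩, fun h x _ => by simp [h]⟩
    · exact (h x (h_model hx (hw none))).1 hx
    · exact (h x (h_model hx (ht _ fun a => hw _))).2 hx

theorem const {c : ZFSet.{u}} (hc : c ∈ 𝕄.M) : DefinableFun 𝕄 fun _ : α → ZFSet.{u} => c :=
  of_definable_mem (fun _ _ => hc) (.var_mem_class (𝕄.sets_are_classes c hc) none)

theorem upair (hs : DefinableFun 𝕄 s) (ht : DefinableFun 𝕄 t) :
    DefinableFun 𝕄 fun v => ({s v, t v} : ZFSet) :=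
  of_definable_mem (fun v hv => 𝕄.pair_mem _ (hs.mem_model v hv) _ (ht.mem_model v hv))
    (((Definable.eq (.var none) hs.lift).or (.eq (.var none) ht.lift)).congr
      fun w _ => by simp)

theorem opair (hs : DefinableFun 𝕄 s) (ht : DefinableFun 𝕄 t) :
    DefinableFun 𝕄 fun v => (s v).pair (t v) := by
  simpa only [ZFSet.pair, ZFSet.pair_eq_singleton] using (hs.upair hs).upair (hs.upair ht)

theorem listEncode : ∀ {m : ℕ} {t : Fin m → (α → ZFSet.{u}) → ZFSet.{u}},
    (∀ i, DefinableFun 𝕄 (t i)) →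
    DefinableFun 𝕄 fun v => CF.listEncode (List.ofFn fun i => t i v)
  | 0, _, _ => by simpa [CF.listEncode] using const 𝕄.empty_mem
  | m + 1, t, ht => by
    simpa [List.ofFn_succ, CF.listEncode] using (ht 0).opair (listEncode fun i : Fin m => ht i.succ)

end DefinableFun

namespace Definable

theorem exists_mem {R : (α → ZFSet.{u}) → ZFSet.{u} → Prop} (ht : DefinableFun 𝕄 t)
    (hR : Definable 𝕄 fun w : Option α → ZFSet.{u} => R (fun a => w (some a)) (w none)) :
    Definable 𝕄 fun v => ∃ x ∈ t v, R v x :=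
  ((Definable.mem (.var none) ht.lift).and hR).exists_mem_model.congr fun v hv =>
    ⟨fun ⟨x, _, hx⟩ => ⟨x, hx⟩,
      fun ⟨x, hx, hxR⟩ => ⟨x, GBModel.mem_of_mem (ht.mem_model v hv) hx, hx, hxR⟩⟩

theorem forall_mem {R : (α → ZFSet.{u}) → ZFSet.{u} → Prop} (ht : DefinableFun 𝕄 t)
    (hR : Definable 𝕄 fun w : Option α → ZFSet.{u} => R (fun a => w (some a)) (w none)) :
    Definable 𝕄 fun v => ∀ x ∈ t v, R v x :=
  (exists_mem (R := fun v x => ¬ R v x) ht hR.not).not.congr fun v _ => by push Not; rfl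

theorem exists_mem_class {R : (α → ZFSet.{u}) → ZFSet.{u} → Prop} {C : Set ZFSet.{u}}
    (hC : C ∈ 𝕄.Cls)
    (hR : Definable 𝕄 fun w : Option α → ZFSet.{u} => R (fun a => w (some a)) (w none)) :
    Definable 𝕄 fun v => ∃ x ∈ C, R v x :=
  ((mem_class hC (.var none)).and hR).exists_mem_model.congr fun _ _ =>
    ⟨fun ⟨x, _, hx⟩ => ⟨x, hx⟩, fun ⟨x, hx, hxR⟩ => ⟨x, 𝕄.classes_sub C hC hx, hx, hxR⟩⟩

theorem forall_mem_class {R : (α → ZFSet.{u}) → ZFSet.{u} → Prop} {C : Set ZFSet.{u}}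
    (hC : C ∈ 𝕄.Cls)
    (hR : Definable 𝕄 fun w : Option α → ZFSet.{u} => R (fun a => w (some a)) (w none)) :
    Definable 𝕄 fun v => ∀ x ∈ C, R v x :=
  (exists_mem_class (R := fun v x => ¬ R v x) hC hR.not).not.congr fun v _ => by push Not; rfl

theorem exists_eq_opair {R : (α → ZFSet.{u}) → ZFSet.{u} → ZFSet.{u} → Prop}
    (ht : DefinableFun 𝕄 t)
    (hR : Definable 𝕄 fun w : Option (Option α) → ZFSet.{u} =>
      R (fun a => w (some (some a))) (w (some none)) (w none)) :
    Definable 𝕄 fun v => ∃ x y, t v = x.pair y ∧ R v x y := by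
  have h_bounded : Definable 𝕄 fun v => ∃ x ∈ 𝕄.M, ∃ y ∈ 𝕄.M, t v = x.pair y ∧ R v x y :=
    .exists_mem_model (.exists_mem_model
      ((Definable.eq ht.lift.lift ((DefinableFun.var (some none)).opair (.var none))).and hR))
  refine h_bounded.congr fun v hv => ⟨fun ⟨x, _, y, _, h⟩ => ⟨x, y, h⟩, fun ⟨x, y, hxy, h⟩ => ?_⟩
  obtain ⟨hx, hy⟩ := GBModel.of_opair_mem (hxy ▸ ht.mem_model v hv)
  exact ⟨x, hx, y, hy, hxy, h⟩

theorem exists_opair_mem {R : (α → ZFSet.{u}) → ZFSet.{u} → ZFSet.{u} → Prop}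
    (ht : DefinableFun 𝕄 t)
    (hR : Definable 𝕄 fun w : Option (Option α) → ZFSet.{u} =>
      R (fun a => w (some (some a))) (w (some none)) (w none)) :
    Definable 𝕄 fun v => ∃ x y, x.pair y ∈ t v ∧ R v x y :=
  have h_bounded : Definable 𝕄 fun v => ∃ z ∈ t v, ∃ x y, z = x.pair y ∧ R v x y :=
    .exists_mem ht (.exists_eq_opair (.var none) (hR.reindex (Option.map (Option.map some))))
  h_bounded.congr fun v _ => by aesop

theorem forall_opair_mem {R : (α → ZFSet.{u}) → ZFSet.{u} → ZFSet.{u} → Prop}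
    (ht : DefinableFun 𝕄 t)
    (hR : Definable 𝕄 fun w : Option (Option α) → ZFSet.{u} =>
      R (fun a => w (some (some a))) (w (some none)) (w none)) :
    Definable 𝕄 fun v => ∀ x y, x.pair y ∈ t v → R v x y :=
  (exists_opair_mem (R := fun v x y => ¬ R v x y) ht hR.not).not.congr fun v _ => by push Not; rfl

theorem forall_fin : ∀ {m : ℕ} {R : (α → ZFSet.{u}) → Fin m → Prop},
    (∀ i, Definable 𝕄 fun v => R v i) → Definable 𝕄 fun v => ∀ i, R v i
  | 0, _, _ => (Definable.eq (.const 𝕄.empty_mem) (.const 𝕄.empty_mem)).congr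
      fun v _ => by simp
  | m + 1, R, hR => ((hR 0).and (forall_fin fun i : Fin m => hR i.succ)).congr
      fun v _ => Fin.forall_fin_succ.symm

theorem exists_tuple : ∀ {m : ℕ} {α : Type} {R : (α → ZFSet.{u}) → (Fin m → ZFSet.{u}) → Prop},
    (Definable 𝕄 fun w : α ⊕ Fin m → ZFSet.{u} =>
      R (fun a => w (.inl a)) fun i => w (.inr i)) →
    Definable 𝕄 fun v => ∃ σs : Fin m → ZFSet.{u}, (∀ i, σs i ∈ 𝕄.M) ∧ R v σs
  | 0, α, R, hR => (hR.reindex (Sum.elim id Fin.elim0)).congr fun v _ => by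
      simp only [Sum.elim_inl, id_eq, Sum.elim_inr, Unique.exists_iff, IsEmpty.forall_iff, true_and]
      exact iff_of_eq (congrArg _ (Subsingleton.elim _ _))
  | m + 1, α, R, hR => by
    have h_cons : Definable 𝕄 fun w : Option α ⊕ Fin m → ZFSet.{u} =>
        R (fun a => w (.inl (some a))) (Fin.cons (w (.inl none)) fun i => w (.inr i)) :=
      (hR.reindex (Sum.elim (fun a => .inl (some a)) (Fin.cons (.inl none) .inr))).congr fun w _ =>
        iff_of_eq (congrArg _ (funext fun i => by cases i using Fin.cases <;> rfl))
    have h_split : Definable 𝕄 fun v => ∃ x ∈ 𝕄.M, ∃ σs : Fin m → ZFSet.{u},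
        (∀ i, σs i ∈ 𝕄.M) ∧ R v (Fin.cons x σs) := .exists_mem_model (exists_tuple h_cons)
    refine h_split.congr fun v _ => ?_
    rw [Fin.exists_fin_succ_pi]
    simp only [Fin.forall_fin_succ, Fin.cons_zero, Fin.cons_succ, and_assoc, exists_and_left]

theorem sat : ∀ {α : Type} (φ : EFormula) {s : ℕ → (α → ZFSet.{u}) → ZFSet.{u}},
    (∀ k, DefinableFun 𝕄 (s k)) → Definable 𝕄 fun v => φ.Sat 𝕄.M fun k => s k v
  | _, .mem i j, _, hs => mem (hs i) (hs j)
  | _, .eq i j, _, hs => eq (hs i) (hs j)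
  | _, .not φ, _, hs => (sat φ hs).not
  | _, .or φ ψ, _, hs => (sat φ hs).or (sat ψ hs)
  | α, .ex i φ, s, hs => by
    have h_update : ∀ k, DefinableFun 𝕄 fun w : Option α → ZFSet.{u} =>
        Function.update (fun j => s j fun a => w (some a)) i (w none) k := fun k => by
      obtain rfl | hk := eq_or_ne k i
      · simpa using DefinableFun.var none
      · simpa [hk] using (hs k).lift
    exact exists_mem_model (sat φ h_update)

end Definable

section Comprehension

variable {R : ZFSet.{u} → ZFSet.{u} → Prop} {a : ZFSet.{u}}

theorem DefinablePred.setOf_mem_Cls {R : ZFSet.{u} → Prop} (hR : DefinablePred 𝕄 R) :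
    {x | x ∈ 𝕄.M ∧ R x} ∈ 𝕄.Cls := by
  obtain ⟨φ, hφ⟩ := hR 1 fun _ => 0
  have h_sat : ∀ x ∈ 𝕄.M, (R x ↔ φ.Sat 𝕄.M 𝕄.classSeq (Function.update (fun _ => ∅) 0 x)) :=
    fun x hx => ((hφ _ (GBModel.update_mem (fun _ => 𝕄.empty_mem) hx 0)).trans (by simp)).symm
  rw [Set.ext fun x => and_congr_right (h_sat x)]
  exact 𝕄.comprehension φ _ _ (fun _ => 𝕄.empty_mem) 𝕄.classSeq_mem

theorem DefinablePred.exists_sep {R : ZFSet.{u} → Prop} (hR : DefinablePred 𝕄 R)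
    (ha : a ∈ 𝕄.M) : ∃ b ∈ 𝕄.M, ∀ x, x ∈ b ↔ x ∈ a ∧ R x := by
  obtain ⟨b, hb, h⟩ := 𝕄.separation _ hR.setOf_mem_Cls a ha
  exact ⟨b, hb, fun x => (h x).trans (and_congr_right fun hx =>
    and_iff_right (GBModel.mem_of_mem ha hx))⟩

theorem DefinableRel.exists_collection (hR : DefinableRel 𝕄 R) (ha : a ∈ 𝕄.M)
    (h : ∀ x ∈ a, ∃ y ∈ 𝕄.M, R x y) :
    ∃ b ∈ 𝕄.M, (∀ x ∈ a, ∃ y ∈ b, R x y) ∧ ∀ y ∈ b, ∃ x ∈ a, R x y := by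
  have h_graph : {z | z ∈ 𝕄.M ∧ ∃ x y, z = x.pair y ∧ R x y} ∈ 𝕄.Cls :=
    DefinablePred.setOf_mem_Cls (.exists_eq_opair (.var ())
      (hR.comp (.var (some none)) (.var none)))
  obtain ⟨c, hc, hac⟩ := 𝕄.collection _ h_graph a ha fun x hx =>
    have ⟨y, hy, hxy⟩ := h x hx
    ⟨y, hy, GBModel.opair_mem (GBModel.mem_of_mem ha hx) hy, x, y, rfl, hxy⟩
  obtain ⟨b, hb, hbc⟩ := DefinablePred.exists_sep (R := fun y => ∃ x ∈ a, R x y)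
    (.exists_mem (.const ha) (hR.comp (.var none) (.var (some ())))) hc
  refine ⟨b, hb, fun x hx => ?_, fun y hy => ((hbc y).1 hy).2⟩
  obtain ⟨y, hy, -, x', y', hxy, hR'⟩ := hac x hx
  obtain ⟨rfl, rfl⟩ := ZFSet.pair_injective hxy
  exact ⟨y, (hbc y).2 ⟨hy, x, hx, hR'⟩, hR'⟩

end Comprehension

end Definability

/-! ### Names and their evaluation -/

section Names

variable {G G' S S' : Set ZFSet.{u}} {s t p x : ZFSet.{u}}

theorem fst_mem_sUnion_sUnion (h : t.pair p ∈ s) : t ∈ (⋃₀ ⋃₀ s : ZFSet) :=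
  ZFSet.mem_sUnion_of_mem (z := {t, p}) (by simp)
    (ZFSet.mem_sUnion_of_mem (by simp [ZFSet.pair]) h)

theorem snd_mem_sUnion_sUnion (h : t.pair p ∈ s) : p ∈ (⋃₀ ⋃₀ s : ZFSet) :=
  ZFSet.mem_sUnion_of_mem (z := {t, p}) (by simp)
    (ZFSet.mem_sUnion_of_mem (by simp [ZFSet.pair]) h)

theorem rank_lt_of_mem_sUnion_sUnion (h : t ∈ (⋃₀ ⋃₀ s : ZFSet)) : t.rank < s.rank :=
  (ZFSet.rank_lt_of_mem h).trans_le
    ((ZFSet.rank_sUnion_le _).trans (ZFSet.rank_sUnion_le _))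

theorem sUnion_sUnion_induction {motive : ZFSet.{u} → Prop}
    (ih : ∀ s, (∀ t ∈ (⋃₀ ⋃₀ s : ZFSet), motive t) → motive s) (s : ZFSet.{u}) : motive s :=
  (InvImage.wf ZFSet.rank wellFounded_lt).induction s fun s h =>
    ih s fun _ ht => h _ (rank_lt_of_mem_sUnion_sUnion ht)

theorem mem_nameEval :
    x ∈ nameEval G s ↔ ∃ t p, t.pair p ∈ s ∧ p ∈ G ∧ nameEval G t = x := by
  rw [nameEval, nameEvalAux, zimage, @ZFSet.mem_image _ (Classical.allZFSetDefinable _)]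
  simp only [ZFSet.mem_sep]
  constructor
  · rintro ⟨t, ⟨-, p, hp, ht⟩, rfl⟩
    rw [dif_pos (rank_lt_of_mem_sUnion_sUnion (fst_mem_sUnion_sUnion ht))]
    exact ⟨t, p, ht, hp, rfl⟩
  · rintro ⟨t, p, ht, hp, rfl⟩
    exact ⟨t, ⟨fst_mem_sUnion_sUnion ht, p, hp, ht⟩,
      dif_pos (rank_lt_of_mem_sUnion_sUnion (fst_mem_sUnion_sUnion ht))⟩

theorem isName_iff : IsName S s ↔ ∀ z ∈ s, ∃ t p, z = t.pair p ∧ p ∈ S ∧ IsName S t := by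
  rw [IsName, IsNameAux]
  refine forall₂_congr fun z (hz : z ∈ s) => exists₂_congr fun t p => and_congr_right fun hzt =>
    and_congr_right fun _ => ?_
  exact exists_prop_of_true (rank_lt_of_mem_sUnion_sUnion (fst_mem_sUnion_sUnion (hzt ▸ hz)))

theorem IsName.of_opair_mem (hs : IsName S s) (h : t.pair p ∈ s) : IsName S t ∧ p ∈ S := by
  obtain ⟨t', p', htp, hp, ht⟩ := isName_iff.1 hs _ h
  obtain ⟨rfl, rfl⟩ := ZFSet.pair_injective htp
  exact ⟨ht, hp⟩

theorem IsName.mono (hS : S ⊆ S') (s : ZFSet.{u}) : IsName S s → IsName S' s := by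
  induction s using sUnion_sUnion_induction with
  | ih s ih =>
    refine fun hs => isName_iff.2 fun z hz => ?_
    obtain ⟨t, p, rfl, hp, ht⟩ := isName_iff.1 hs z hz
    exact ⟨t, p, rfl, hS hp, ih t (fst_mem_sUnion_sUnion hz) ht⟩

theorem nameEval_congr {K : Set ZFSet.{u}}
    (hK : ∀ s ∈ K, ∀ t p, t.pair p ∈ s → t ∈ K ∧ (p ∈ G ↔ p ∈ G')) (s : ZFSet.{u}) :
    s ∈ K → nameEval G s = nameEval G' s := by
  induction s using sUnion_sUnion_induction with
  | ih s ih =>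
    refine fun hs => ZFSet.ext fun x => ?_
    simp only [mem_nameEval]
    refine exists₂_congr fun t p => and_congr_right fun htp => ?_
    rw [(hK s hs t p htp).2, ih t (fst_mem_sUnion_sUnion htp) (hK s hs t p htp).1]

end Names

/-! ### Recursion along self-supporting sets -/

section SelfSupporting

/-- The set `T` supports each of its elements in the sense of `Φ`. Recursively defined notions are
witnessed by self-supporting sets: transitive closures, sets of names, and partial evaluation
functions are instances. -/
def IsSelfSupporting (Φ : ZFSet.{u} → ZFSet.{u} → Prop) (T : ZFSet.{u}) : Prop :=
  ∀ s ∈ T, Φ s T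

variable {𝕄 : GBModel.{u}} {Φ Ψ : ZFSet.{u} → ZFSet.{u} → Prop} {a s T : ZFSet.{u}}

theorem IsSelfSupporting.definablePred (hΦ : DefinableRel 𝕄 Φ) :
    DefinablePred 𝕄 (IsSelfSupporting Φ) :=
  .forall_mem (.var ()) (hΦ.comp (.var none) (.var (some ())))

theorem IsSelfSupporting.sUnion (h_mono : ∀ s, Monotone (Φ s))
    (h : ∀ T ∈ a, IsSelfSupporting Φ T) : IsSelfSupporting Φ (⋃₀ a) := fun s hs => by
  obtain ⟨T, hT, hsT⟩ := ZFSet.mem_sUnion.1 hs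
  exact h_mono s (fun _ hx => ZFSet.mem_sUnion_of_mem hx hT) (h T hT s hsT)

theorem exists_isSelfSupporting_forall (hΦ : DefinableRel 𝕄 Φ) (hΦ_mono : ∀ s, Monotone (Φ s))
    (hΨ : DefinableRel 𝕄 Ψ) (hΨ_mono : ∀ s, Monotone (Ψ s)) (ha : a ∈ 𝕄.M)
    (h : ∀ z ∈ a, ∃ T ∈ 𝕄.M, IsSelfSupporting Φ T ∧ Ψ z T) :
    ∃ T ∈ 𝕄.M, IsSelfSupporting Φ T ∧ ∀ z ∈ a, Ψ z T := by
  have h_rel : DefinableRel 𝕄 fun z T => IsSelfSupporting Φ T ∧ Ψ z T :=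
    ((IsSelfSupporting.definablePred hΦ).comp (.var 1)).and hΨ
  obtain ⟨b, hb, hab, hba⟩ := h_rel.exists_collection ha h
  refine ⟨⋃₀ b, 𝕄.sUnion_mem b hb, .sUnion hΦ_mono fun T hT => ?_, fun z hz => ?_⟩
  · obtain ⟨_, _, hT_self, _⟩ := hba T hT
    exact hT_self
  · obtain ⟨T, hT, _, hzT⟩ := hab z hz
    exact hΨ_mono z (fun _ hx => ZFSet.mem_sUnion_of_mem hx hT) hzT

theorem IsSelfSupporting.exists_mem (hΦ_mono : ∀ s, Monotone (Φ s)) (hT : T ∈ 𝕄.M)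
    (hT_self : IsSelfSupporting Φ T) (hs : s ∈ 𝕄.M) (hsT : Φ s T) :
    ∃ U ∈ 𝕄.M, IsSelfSupporting Φ U ∧ s ∈ U := by
  have h_le : T ≤ T ∪ {s} := fun _ hx => ZFSet.mem_union.2 (.inl hx)
  refine ⟨T ∪ {s}, GBModel.union_mem hT (GBModel.singleton_mem hs), fun r hr => ?_, by simp⟩
  obtain hrT | hrs := ZFSet.mem_union.1 hr
  · exact hΦ_mono r h_le (hT_self r hrT)
  · exact ZFSet.mem_singleton.1 hrs ▸ hΦ_mono s h_le hsT

theorem exists_isSelfSupporting_mem (hΨ : DefinableRel 𝕄 Ψ) (hΨ_mono : ∀ z, Monotone (Ψ z))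
    (hs : s ∈ 𝕄.M)
    (h : ∀ z ∈ s, ∃ T ∈ 𝕄.M, IsSelfSupporting (fun r T => ∀ z ∈ r, Ψ z T) T ∧ Ψ z T) :
    ∃ T ∈ 𝕄.M, IsSelfSupporting (fun r T => ∀ z ∈ r, Ψ z T) T ∧ s ∈ T := by
  have h_mono : ∀ r : ZFSet.{u}, Monotone fun T => ∀ z ∈ r, Ψ z T :=
    fun r _ _ hTU hT z hz => hΨ_mono z hTU (hT z hz)
  have h_rel : DefinableRel 𝕄 fun r T => ∀ z ∈ r, Ψ z T :=
    .forall_mem (.var 0) (hΨ.comp (.var none) (.var (some 1)))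
  obtain ⟨T, hT, hT_self, hsT⟩ := exists_isSelfSupporting_forall h_rel h_mono hΨ hΨ_mono hs h
  exact hT_self.exists_mem h_mono hT hs hsT

end SelfSupporting

section TransitiveSets

variable {𝕄 : GBModel.{u}}

theorem definablePred_isTransitive : DefinablePred 𝕄 ZFSet.IsTransitive :=
  .forall_mem (.var ()) (.forall_mem (.var none) (.mem (.var none) (.var (some (some ())))))

theorem exists_isTransitive_mem (x : ZFSet.{u}) :
    x ∈ 𝕄.M → ∃ T ∈ 𝕄.M, T.IsTransitive ∧ x ∈ T := by
  induction x using ZFSet.inductionOn with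
  | _ x ih =>
    intro hx
    exact exists_isSelfSupporting_mem (Ψ := fun z T => z ∈ T) (.mem_var 0 1)
      (fun _ _ _ hTU hz => hTU hz) hx fun y hy => ih y hy (GBModel.mem_of_mem hx hy)

theorem mem_and_mem_of_opair_mem {T x y : ZFSet.{u}} (hT : T.IsTransitive) (h : x.pair y ∈ T) :
    x ∈ T ∧ y ∈ T := by
  have h_upair : ({x, y} : ZFSet) ∈ T := hT.subset_of_mem h (by simp [ZFSet.pair])
  exact ⟨hT.subset_of_mem h_upair (by simp), hT.subset_of_mem h_upair (by simp)⟩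

end TransitiveSets

section DefinabilityOfNames

variable {𝕄 : GBModel.{u}} {S : Set ZFSet.{u}} {T : ZFSet.{u}}

theorem isName_of_isSelfSupporting
    (hT : IsSelfSupporting (fun s T => ∀ z ∈ s, ∃ t ∈ T, ∃ p ∈ S, z = t.pair p) T)
    (s : ZFSet.{u}) : s ∈ T → IsName S s := by
  induction s using sUnion_sUnion_induction with
  | ih s ih =>
    refine fun hs => isName_iff.2 fun z hz => ?_
    obtain ⟨t, ht, p, hp, rfl⟩ := hT s hs z hz
    exact ⟨t, p, rfl, hp, ih t (fst_mem_sUnion_sUnion hz) ht⟩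

theorem definableRel_exists_eq_opair (hS : S ∈ 𝕄.Cls) :
    DefinableRel 𝕄 fun z T => ∃ t ∈ T, ∃ p ∈ S, z = t.pair p :=
  .exists_mem (.var 1) (.exists_mem_class hS
    (.eq (.var (some (some 0))) (.opair (.var (some none)) (.var none))))

theorem IsName.exists_isSelfSupporting (hS : S ∈ 𝕄.Cls) (s : ZFSet.{u}) :
    s ∈ 𝕄.M → IsName S s →
    ∃ T ∈ 𝕄.M, IsSelfSupporting (fun s T => ∀ z ∈ s, ∃ t ∈ T, ∃ p ∈ S, z = t.pair p) T ∧
      s ∈ T := by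
  induction s using sUnion_sUnion_induction with
  | ih s ih =>
    refine fun hs hs_name => exists_isSelfSupporting_mem (definableRel_exists_eq_opair hS)
      (fun z T U hTU ⟨t, ht, h⟩ => ⟨t, hTU ht, h⟩) hs fun z hz => ?_
    obtain ⟨t, p, rfl, hp, ht⟩ := isName_iff.1 hs_name z hz
    obtain ⟨T, hT, hT_self, htT⟩ := ih t (fst_mem_sUnion_sUnion hz)
      (GBModel.of_opair_mem (GBModel.mem_of_mem hs hz)).1 ht
    exact ⟨T, hT, hT_self, t, htT, p, hp, rfl⟩

theorem definablePred_isName (hS : S ∈ 𝕄.Cls) : DefinablePred 𝕄 (IsName S) := by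
  have h_rel : DefinableRel 𝕄 fun s T => ∀ z ∈ s, ∃ t ∈ T, ∃ p ∈ S, z = t.pair p :=
    .forall_mem (.var 0) ((definableRel_exists_eq_opair hS).comp (.var none) (.var (some 1)))
  have h_exists : DefinablePred 𝕄 fun s => ∃ T ∈ 𝕄.M,
      IsSelfSupporting (fun s T => ∀ z ∈ s, ∃ t ∈ T, ∃ p ∈ S, z = t.pair p) T ∧ s ∈ T :=
    .exists_mem_model (((IsSelfSupporting.definablePred h_rel).comp (.var none)).and
      (.mem_var (some ()) none))
  exact h_exists.congr fun v hv => ⟨fun ⟨T, _, hT, hs⟩ => isName_of_isSelfSupporting hT _ hs,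
    IsName.exists_isSelfSupporting hS _ (hv ())⟩

end DefinabilityOfNames

section DefinabilityOfEvaluation

/-- `f` witnesses that `z = ⟨s, s^G⟩`, provided that it correctly evaluates the names in `s`. The
sets that are self-supporting for `EvalStep G` are the graphs of partial evaluation functions whose
domain contains `t` whenever it contains `s` with `⟨t, p⟩ ∈ s` and `p ∈ G`. -/
def EvalStep (G : Set ZFSet.{u}) (z f : ZFSet.{u}) : Prop :=
  ∃ s x : ZFSet.{u}, z = s.pair x ∧
    (∀ y ∈ x, ∃ t p : ZFSet.{u}, t.pair p ∈ s ∧ p ∈ G ∧ t.pair y ∈ f) ∧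
    ∀ t p : ZFSet.{u}, t.pair p ∈ s → p ∈ G → ∃ y ∈ x, t.pair y ∈ f

variable {𝕄 : GBModel.{u}} {G : Set ZFSet.{u}} {H : ZFSet.{u} → Set ZFSet.{u}} {f s : ZFSet.{u}}

theorem monotone_evalStep (z : ZFSet.{u}) : Monotone (EvalStep G z) := by
  rintro f g hfg ⟨s, x, rfl, hx, hs⟩
  refine ⟨s, x, rfl, fun y hy => ?_, fun t p htp hp => ?_⟩
  · obtain ⟨t, p, htp, hp, hty⟩ := hx y hy
    exact ⟨t, p, htp, hp, hfg hty⟩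
  · obtain ⟨y, hy, hty⟩ := hs t p htp hp
    exact ⟨y, hy, hfg hty⟩

theorem eq_nameEval_of_isSelfSupporting (hf : IsSelfSupporting (EvalStep G) f) (s : ZFSet.{u}) :
    ∀ x, s.pair x ∈ f → x = nameEval G s := by
  induction s using sUnion_sUnion_induction with
  | ih s ih =>
    intro x hsx
    obtain ⟨s', x', h_eq, hx, hs⟩ := hf _ hsx
    obtain ⟨rfl, rfl⟩ := ZFSet.pair_injective h_eq
    refine ZFSet.ext fun y => ⟨fun hy => ?_, fun hy => ?_⟩
    · obtain ⟨t, p, htp, hp, hty⟩ := hx y hy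
      exact mem_nameEval.2 ⟨t, p, htp, hp, (ih t (fst_mem_sUnion_sUnion htp) y hty).symm⟩
    · obtain ⟨t, p, htp, hp, rfl⟩ := mem_nameEval.1 hy
      obtain ⟨y, hy, hty⟩ := hs t p htp hp
      exact ih t (fst_mem_sUnion_sUnion htp) y hty ▸ hy

theorem Definable.evalStep {α : Type} {q z f : (α → ZFSet.{u}) → ZFSet.{u}}
    (hH : DefinableRel 𝕄 fun q p => p ∈ H q) (hq : DefinableFun 𝕄 q) (hz : DefinableFun 𝕄 z)
    (hf : DefinableFun 𝕄 f) : Definable 𝕄 fun v => EvalStep (H (q v)) (z v) (f v) := by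
  unfold EvalStep
  exact .exists_eq_opair hz <| .and
    (.forall_mem (.var none) <| .exists_opair_mem (.var (some (some none))) <|
      (hH.comp hq.lift.lift.lift.lift.lift (.var none)).and
        (.mem (.opair (.var (some none)) (.var (some (some none)))) hf.lift.lift.lift.lift.lift))
    (.forall_opair_mem (.var (some none)) <|
      (hH.comp hq.lift.lift.lift.lift (.var none)).imp <|
        .exists_mem (.var (some (some none))) <|
          .mem (.opair (.var (some (some none))) (.var none)) hf.lift.lift.lift.lift.lift)

theorem nameEval_mem_of_isSelfSupporting (hG : DefinablePred 𝕄 (· ∈ G)) (hs : s ∈ 𝕄.M)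
    (hf : f ∈ 𝕄.M) (hf_self : IsSelfSupporting (EvalStep G) f)
    (h_dom : ∀ t ∈ (⋃₀ ⋃₀ s : ZFSet), ∃ x ∈ 𝕄.M, t.pair x ∈ f) : nameEval G s ∈ 𝕄.M := by
  have h_eval : ∀ t p : ZFSet.{u}, t.pair p ∈ s → t.pair (nameEval G t) ∈ f := fun t p htp => by
    obtain ⟨x, -, htx⟩ := h_dom t (fst_mem_sUnion_sUnion htp)
    exact eq_nameEval_of_isSelfSupporting hf_self t x htx ▸ htx
  have h_pred : DefinablePred 𝕄 fun x => ∃ t p : ZFSet.{u}, t.pair p ∈ s ∧ p ∈ G ∧ t.pair x ∈ f :=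
    .exists_opair_mem (.const hs) ((hG.comp (.var none)).and
      (.mem (.opair (.var (some none)) (.var (some (some ())))) (.const hf)))
  obtain ⟨b, hb, hb_iff⟩ := h_pred.exists_sep (𝕄.sUnion_mem _ (𝕄.sUnion_mem f hf))
  suffices nameEval G s = b from this ▸ hb
  refine ZFSet.ext fun x => mem_nameEval.trans ((hb_iff x).trans ⟨?_, ?_⟩).symm
  · rintro ⟨-, t, p, htp, hp, htx⟩
    exact ⟨t, p, htp, hp, (eq_nameEval_of_isSelfSupporting hf_self t x htx).symm⟩
  · rintro ⟨t, p, htp, hp, rfl⟩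
    exact ⟨snd_mem_sUnion_sUnion (h_eval t p htp), t, p, htp, hp, h_eval t p htp⟩

theorem exists_isSelfSupporting_evalStep (hG : DefinablePred 𝕄 (· ∈ G)) (s : ZFSet.{u}) :
    s ∈ 𝕄.M → ∃ f ∈ 𝕄.M, IsSelfSupporting (EvalStep G) f ∧ s.pair (nameEval G s) ∈ f := by
  induction s using sUnion_sUnion_induction with
  | ih s ih =>
    intro hs
    have hss := 𝕄.sUnion_mem _ (𝕄.sUnion_mem s hs)
    have h_eval_mem : ∀ {f t x : ZFSet.{u}}, f ∈ 𝕄.M → t.pair x ∈ f → x ∈ 𝕄.M := fun hf htx =>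
      (GBModel.of_opair_mem (GBModel.mem_of_mem hf htx)).2
    obtain ⟨f, hf, hf_self, hf_dom⟩ := exists_isSelfSupporting_forall
      (Ψ := fun t f => ∃ x ∈ 𝕄.M, t.pair x ∈ f)
      (.evalStep (H := fun _ => G) (hG.comp (.var 1)) (.var 0) (.var 0) (.var 1))
      monotone_evalStep
      (.exists_mem_model (.mem (.opair (.var (some 0)) (.var none)) (.var (some 1))))
      (fun t f g hfg ⟨x, hx, htx⟩ => ⟨x, hx, hfg htx⟩) hss fun t ht => by
        obtain ⟨f, hf, hf_self, htf⟩ := ih t ht (GBModel.mem_of_mem hss ht)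
        exact ⟨f, hf, hf_self, _, h_eval_mem hf htf, htf⟩
    have hx := nameEval_mem_of_isSelfSupporting hG hs hf hf_self hf_dom
    refine hf_self.exists_mem monotone_evalStep hf (GBModel.opair_mem hs hx)
      ⟨s, _, rfl, fun y hy => ?_, fun t p htp hp => ?_⟩
    · obtain ⟨t, p, htp, hp, rfl⟩ := mem_nameEval.1 hy
      obtain ⟨x, -, htx⟩ := hf_dom t (fst_mem_sUnion_sUnion htp)
      exact ⟨t, p, htp, hp, eq_nameEval_of_isSelfSupporting hf_self t x htx ▸ htx⟩
    · obtain ⟨x, -, htx⟩ := hf_dom t (fst_mem_sUnion_sUnion htp)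
      have := eq_nameEval_of_isSelfSupporting hf_self t x htx
      exact ⟨x, mem_nameEval.2 ⟨t, p, htp, hp, this.symm⟩, htx⟩

theorem nameEval_mem_model (hG : DefinablePred 𝕄 (· ∈ G)) (hs : s ∈ 𝕄.M) :
    nameEval G s ∈ 𝕄.M := by
  obtain ⟨f, hf, -, h_mem⟩ := exists_isSelfSupporting_evalStep hG s hs
  exact (GBModel.of_opair_mem (GBModel.mem_of_mem hf h_mem)).2

theorem DefinableFun.nameEval {α : Type} {q s : (α → ZFSet.{u}) → ZFSet.{u}}
    (hH : DefinableRel 𝕄 fun q p => p ∈ H q) (hq : DefinableFun 𝕄 q) (hs : DefinableFun 𝕄 s) :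
    DefinableFun 𝕄 fun v => CF.nameEval (H (q v)) (s v) := by
  have hH_pred : ∀ v, (∀ a, v a ∈ 𝕄.M) → DefinablePred 𝕄 (· ∈ H (q v)) := fun v hv =>
    hH.comp (.const (hq.mem_model v hv)) (.var ())
  refine ⟨fun v hv => nameEval_mem_model (hH_pred v hv) (hs.mem_model v hv), ?_⟩
  have h_graph : Definable 𝕄 fun w : Option α → ZFSet.{u} => ∃ f ∈ 𝕄.M,
      (∀ z ∈ f, EvalStep (H (q fun a => w (some a))) z f) ∧
        (s fun a => w (some a)).pair (w none) ∈ f :=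
    .exists_mem_model <| .and
      (.forall_mem (.var none) (.evalStep hH hq.lift.lift.lift (.var none) (.var (some none))))
      (.mem (.opair hs.lift.lift (.var (some none))) (.var none))
  refine h_graph.congr fun w hw => ⟨fun ⟨f, _, hf_self, h_mem⟩ => ?_, fun h_eq => ?_⟩
  · exact eq_nameEval_of_isSelfSupporting hf_self _ _ h_mem
  · exact h_eq ▸ exists_isSelfSupporting_evalStep (hH_pred _ fun a => hw (some a)) _
      (hs.mem_model _ fun a => hw (some a))

end DefinabilityOfEvaluation

section CheckNames

variable {𝕄 : GBModel.{u}} {e : ZFSet.{u}}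

theorem nameEval_singleton_eq {b c x : ZFSet.{u}} (hc : ∀ z, z ∈ c ↔ ∃ τ ∈ b, z = τ.pair e)
    (hx : ∀ y, y ∈ x ↔ ∃ τ ∈ b, nameEval {e} τ = y) : nameEval {e} c = x := by
  refine ZFSet.ext fun y => mem_nameEval.trans ?_
  simp only [hx, hc, ZFSet.pair_inj, Set.mem_singleton_iff]
  aesop

theorem exists_isName_singleton_nameEval_eq (he : e ∈ 𝕄.M) (x : ZFSet.{u}) :
    x ∈ 𝕄.M → ∃ σ ∈ 𝕄.M, IsName {e} σ ∧ nameEval {e} σ = x := by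
  have he_cls : ({e} : Set ZFSet.{u}) ∈ 𝕄.Cls :=
    ZFSet.coe_singleton e ▸ 𝕄.sets_are_classes _ (GBModel.singleton_mem he)
  have h_name : DefinableRel 𝕄 fun y τ => IsName {e} τ ∧ nameEval {e} τ = y :=
    ((definablePred_isName he_cls).comp (.var 1)).and
      (.eq (.nameEval (H := fun _ => {e}) (.mem_class he_cls (.var 1)) (.var 0) (.var 1)) (.var 0))
  have h_pair : DefinableRel 𝕄 fun τ z => z = τ.pair e :=
    .eq (.var 1) (.opair (.var 0) (.const he))
  induction x using ZFSet.inductionOn with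
  | _ x ih =>
    intro hx
    obtain ⟨b, hb, hxb, hbx⟩ := h_name.exists_collection hx fun y hy =>
      ih y hy (GBModel.mem_of_mem hx hy)
    obtain ⟨c, hc, hbc, hcb⟩ := h_pair.exists_collection hb fun τ hτ =>
      ⟨_, GBModel.opair_mem (GBModel.mem_of_mem hb hτ) he, rfl⟩
    have hc_iff : ∀ z, z ∈ c ↔ ∃ τ ∈ b, z = τ.pair e := fun z =>
      ⟨hcb z, fun ⟨τ, hτ, hz⟩ => have ⟨_, h, h_eq⟩ := hbc τ hτ; hz ▸ h_eq ▸ h⟩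
    refine ⟨c, hc, isName_iff.2 fun z hz => ?_, nameEval_singleton_eq hc_iff fun y => ?_⟩
    · obtain ⟨τ, hτ, rfl⟩ := hcb z hz
      obtain ⟨_, _, hτ_name, _⟩ := hbx τ hτ
      exact ⟨τ, e, rfl, rfl, hτ_name⟩
    · constructor
      · intro hy
        obtain ⟨τ, hτ, -, h_eval⟩ := hxb y hy
        exact ⟨τ, hτ, h_eval⟩
      · rintro ⟨τ, hτ, rfl⟩
        obtain ⟨y, hy, -, h_eval⟩ := hbx τ hτ
        exact h_eval ▸ hy

end CheckNames

/-! ### Conditions deciding a name -/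

namespace ClassForcing

variable {𝕄 : GBModel.{u}} {F : ClassForcing 𝕄} {p q s t : ZFSet.{u}}

theorem mem_model (hp : p ∈ F.P) : p ∈ 𝕄.M := 𝕄.classes_sub _ F.P_cls hp

theorem definableRel_le : DefinableRel 𝕄 fun p q => p ∈ F.P ∧ q ∈ F.P ∧ F.le p q :=
  (Definable.mem_class F.le_cls (.opair (.var 0) (.var 1))).congr fun v _ => by
    constructor
    · rintro ⟨p, hp, q, hq, hpq, h_eq⟩
      obtain ⟨hvp, hvq⟩ := ZFSet.pair_injective h_eq
      exact hvp ▸ hvq ▸ ⟨hp, hq, hpq⟩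
    · exact fun ⟨hp, hq, hpq⟩ => ⟨_, hp, _, hq, hpq, rfl⟩

theorem definableRel_compat :
    DefinableRel 𝕄 fun p q => p ∈ F.P ∧ q ∈ F.P ∧ Compat F.P F.le p q := by
  have h_ext : DefinableRel 𝕄 fun p q => ∃ r ∈ F.P,
      (r ∈ F.P ∧ p ∈ F.P ∧ F.le r p) ∧ r ∈ F.P ∧ q ∈ F.P ∧ F.le r q :=
    .exists_mem_class F.P_cls ((definableRel_le.comp (.var none) (.var (some 0))).and
      (definableRel_le.comp (.var none) (.var (some 1))))
  exact h_ext.congr fun v _ => by simp only [Compat]; grind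

variable (F) in
/-- The conditions `a` with `q ≤* a`, which lie in every generic filter containing `q`. -/
def starUpper (q : ZFSet.{u}) : Set ZFSet.{u} :=
  {a | q ∈ F.P ∧ a ∈ F.P ∧ leStar F.P F.le q a}

theorem definableRel_mem_starUpper : DefinableRel 𝕄 fun q a => a ∈ F.starUpper q := by
  have h_ext : DefinableRel 𝕄 fun q a => q ∈ F.P ∧ a ∈ F.P ∧ ∀ r ∈ F.P,
      (r ∈ F.P ∧ q ∈ F.P ∧ F.le r q) → r ∈ F.P ∧ a ∈ F.P ∧ Compat F.P F.le r a :=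
    .and (.mem_class F.P_cls (.var 0)) <| .and (.mem_class F.P_cls (.var 1)) <|
      .forall_mem_class F.P_cls <| (definableRel_le.comp (.var none) (.var (some 0))).imp
        (definableRel_compat.comp (.var none) (.var (some 1)))
  exact h_ext.congr fun v _ => by simp only [starUpper, leStar, Set.mem_ofPred_eq]; grind

variable (F) in
/-- The condition `q` decides, for some transitive set of `M` that contains `s`, all conditions in
that set. Such a `q` determines the value of the name `s`. -/
def DecidesName (q s : ZFSet.{u}) : Prop :=
  q ∈ F.P ∧ ∃ T ∈ 𝕄.M, T.IsTransitive ∧ s ∈ T ∧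
    ∀ a ∈ T, a ∈ F.P → leStar F.P F.le q a ∨ ¬ Compat F.P F.le q a

theorem definableRel_decidesName : DefinableRel 𝕄 F.DecidesName := by
  have h_ext : DefinableRel 𝕄 fun q s => q ∈ F.P ∧ ∃ T ∈ 𝕄.M, T.IsTransitive ∧ s ∈ T ∧
      ∀ a ∈ T, a ∈ F.P → a ∈ F.starUpper q ∨ ¬ (q ∈ F.P ∧ a ∈ F.P ∧ Compat F.P F.le q a) :=
    .and (.mem_class F.P_cls (.var 0)) <| .exists_mem_model <|
      (definablePred_isTransitive.comp (.var none)).and <| .and (.mem_var (some 1) none) <|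
        .forall_mem (.var none) <| .imp (.mem_class F.P_cls (.var none)) <|
          .or (definableRel_mem_starUpper.comp (.var (some (some 0))) (.var none))
            (definableRel_compat.comp (.var (some (some 0))) (.var none)).not
  refine h_ext.congr fun v _ => and_congr_right fun hq => exists_congr fun T => ?_
  simp +contextual only [starUpper, Set.mem_ofPred_eq, hq, true_and]

theorem DecidesName.of_le (h : F.DecidesName q s) (hp : p ∈ F.P) (hpq : F.le p q) :
    F.DecidesName p s := by
  obtain ⟨-, T, hT, hT_trans, hsT, h_dec⟩ := h
  refine ⟨hp, T, hT, hT_trans, hsT, fun a haT ha => (h_dec a haT ha).imp ?_ ?_⟩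
  · exact fun h_star r hr hrp => h_star r hr (F.le_trans _ _ _ hrp hpq)
  · exact mt fun ⟨r, hr, hrp, hra⟩ => ⟨r, hr, F.le_trans _ _ _ hrp hpq, hra⟩

theorem DecidesName.of_opair (h : F.DecidesName q (s.pair t)) :
    F.DecidesName q s ∧ F.DecidesName q t := by
  obtain ⟨hq, T, hT, hT_trans, hstT, h_dec⟩ := h
  obtain ⟨hs, ht⟩ := mem_and_mem_of_opair_mem hT_trans hstT
  exact ⟨⟨hq, T, hT, hT_trans, hs, h_dec⟩, hq, T, hT, hT_trans, ht, h_dec⟩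

theorem DecidesName.of_listEncode : ∀ {m : ℕ} {σs : Fin m → ZFSet.{u}},
    F.DecidesName q (listEncode (List.ofFn σs)) → ∀ i, F.DecidesName q (σs i)
  | 0, _, _, i => i.elim0
  | m + 1, σs, h, i => by
    rw [List.ofFn_succ, listEncode] at h
    cases i using Fin.cases with
    | zero => exact h.of_opair.1
    | succ i => exact DecidesName.of_listEncode h.of_opair.2 i

end ClassForcing

theorem SetDecisionProperty.exists_le_decidesName {𝕄 : GBModel.{u}} {F : ClassForcing 𝕄}
    {p s : ZFSet.{u}} (hsdp : SetDecisionProperty 𝕄 F) (hp : p ∈ F.P) (hs : s ∈ 𝕄.M) :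
    ∃ q, F.le q p ∧ F.DecidesName q s := by
  obtain ⟨T, hT, hT_trans, hsT⟩ := exists_isTransitive_mem s hs
  obtain ⟨A, hA, hA_iff⟩ := 𝕄.separation F.P F.P_cls T hT
  obtain ⟨q, hq, hqp, h_dec⟩ := hsdp p hp A hA fun a ha => ((hA_iff a).1 ha).2
  exact ⟨q, hqp, hq, T, hT, hT_trans, hsT, fun a haT ha => h_dec a ((hA_iff a).2 ⟨haT, ha⟩)⟩

/-! ### Generic filters -/

section RasiowaSikorski

variable {𝕄 : GBModel.{u}} {F : ClassForcing 𝕄}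

variable (F) in
/-- The conditions of `F` with the reversed order, so that filters on `F` become order ideals. -/
def ClassForcing.Cond : Type (u + 1) := F.P

instance : Preorder F.Cond where
  le p q := F.le q.1 p.1
  le_refl p := F.le_refl p.1 p.2
  le_trans p q r hpq hqr := F.le_trans r.1 q.1 p.1 hqr hpq

theorem isFilterOn_image_ideal (I : Order.Ideal F.Cond) :
    IsFilterOn F.P F.le (Subtype.val '' (I : Set F.Cond)) := by
  refine ⟨?_, I.nonempty.image _, ?_, ?_⟩
  · rintro _ ⟨p, -, rfl⟩
    exact p.2
  · rintro _ ⟨p, hp, rfl⟩ q hq hpq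
    exact ⟨⟨q, hq⟩, I.lower hpq hp, rfl⟩
  · rintro _ ⟨p, hp, rfl⟩ _ ⟨q, hq, rfl⟩
    obtain ⟨r, hr, hpr, hqr⟩ := I.directed p hp q hq
    exact ⟨r.1, ⟨r, hr, rfl⟩, hpr, hqr⟩

theorem exists_isGeneric_mem {p : ZFSet.{u}} (hp : p ∈ F.P) :
    ∃ G, IsGeneric 𝕄 F.P F.le G ∧ p ∈ G := by
  let denseClasses := {D : Set ZFSet.{u} // D ∈ 𝕄.Cls ∧ DenseIn F.P F.le D}
  have : Countable denseClasses := (𝕄.countable_Cls.mono fun _ hD => hD.1).to_subtype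
  let := Encodable.ofCountable denseClasses
  let cofinals : denseClasses → Order.Cofinal F.Cond := fun D =>
    { carrier := {r | r.1 ∈ D.1}
      isCofinal := fun r =>
        have ⟨q, hqD, hqr⟩ := D.2.2.2 r.1 r.2
        ⟨⟨q, D.2.2.1 hqD⟩, hqD, hqr⟩ }
  refine ⟨_, ⟨isFilterOn_image_ideal (Order.idealOfCofinals ⟨p, hp⟩ cofinals),
    fun D hD hD_dense => ?_⟩, ⟨p, hp⟩, Order.mem_idealOfCofinals _ cofinals, rfl⟩
  obtain ⟨r, hrD, hr⟩ := Order.cofinal_meets_idealOfCofinals ⟨p, hp⟩ cofinals ⟨D, hD, hD_dense⟩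
  exact ⟨r.1, ⟨r, hr, rfl⟩, hrD⟩

end RasiowaSikorski

namespace IsGeneric

variable {𝕄 : GBModel.{u}} {F : ClassForcing 𝕄} {G : Set ZFSet.{u}} {p q s : ZFSet.{u}}

theorem mem_forcing (hG : IsGeneric 𝕄 F.P F.le G) (hp : p ∈ G) : p ∈ F.P := hG.1.1 hp

theorem mem_of_le (hG : IsGeneric 𝕄 F.P F.le G) (hp : p ∈ G) (hq : q ∈ F.P) (hpq : F.le p q) :
    q ∈ G := hG.1.2.2.1 p hp q hq hpq

theorem exists_le_le (hG : IsGeneric 𝕄 F.P F.le G) (hp : p ∈ G) (hq : q ∈ G) :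
    ∃ r ∈ G, F.le r p ∧ F.le r q := hG.1.2.2.2 p hp q hq

theorem compat (hG : IsGeneric 𝕄 F.P F.le G) (hp : p ∈ G) (hq : q ∈ G) :
    Compat F.P F.le p q :=
  have ⟨r, hr, hrp, hrq⟩ := hG.exists_le_le hp hq
  ⟨r, hG.mem_forcing hr, hrp, hrq⟩

theorem one_mem (hG : IsGeneric 𝕄 F.P F.le G) : F.one ∈ G := by
  obtain ⟨p, hp⟩ := hG.1.2.1
  exact hG.mem_of_le hp F.one_mem (F.le_one p (hG.mem_forcing hp))

theorem exists_mem_of_dense {R : ZFSet.{u} → Prop} (hG : IsGeneric 𝕄 F.P F.le G)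
    (hR : DefinablePred 𝕄 R) (h_dense : ∀ p ∈ F.P, ∃ q ∈ F.P, F.le q p ∧ R q) :
    ∃ q ∈ G, R q := by
  have h_cls : {q | q ∈ 𝕄.M ∧ q ∈ F.P ∧ R q} ∈ 𝕄.Cls :=
    DefinablePred.setOf_mem_Cls ((Definable.mem_class F.P_cls (.var ())).and hR)
  obtain ⟨q, hqG, -, -, hq⟩ := hG.2 _ h_cls ⟨fun q hq => hq.2.1, fun p hp =>
    have ⟨q, hq, hqp, hqR⟩ := h_dense p hp
    ⟨q, ⟨ClassForcing.mem_model hq, hq, hqR⟩, hqp⟩⟩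
  exact ⟨q, hqG, hq⟩

theorem starUpper_subset (hG : IsGeneric 𝕄 F.P F.le G) (hq : q ∈ G) : F.starUpper q ⊆ G := by
  rintro a ⟨hqP, ha, h_star⟩
  have h_def : DefinablePred 𝕄 fun r =>
      (r ∈ F.P ∧ a ∈ F.P ∧ F.le r a) ∨ ¬ (r ∈ F.P ∧ q ∈ F.P ∧ Compat F.P F.le r q) :=
    .or (ClassForcing.definableRel_le.comp (.var ()) (.const (ClassForcing.mem_model ha)))
      (ClassForcing.definableRel_compat.comp (.var ()) (.const (ClassForcing.mem_model hqP))).not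
  obtain ⟨r, hr, ⟨-, -, hra⟩ | hrq⟩ := hG.exists_mem_of_dense h_def fun p hp => by
    by_cases hpq : Compat F.P F.le p q
    · obtain ⟨r, hr, hrp, hrq⟩ := hpq
      obtain ⟨t, ht, htr, hta⟩ := h_star r hr hrq
      exact ⟨t, ht, F.le_trans _ _ _ htr hrp, .inl ⟨ht, ha, hta⟩⟩
    · exact ⟨p, hp, F.le_refl p hp, .inr fun h => hpq h.2.2⟩
  · exact hG.mem_of_le hr ha hra
  · exact absurd ⟨hG.mem_forcing hr, hqP, hG.compat hr hq⟩ hrq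

theorem exists_le_decidesName (hG : IsGeneric 𝕄 F.P F.le G) (hsdp : SetDecisionProperty 𝕄 F)
    (hp : p ∈ G) (hs : s ∈ 𝕄.M) : ∃ q ∈ G, F.le q p ∧ F.DecidesName q s := by
  obtain ⟨q, hq, hqs⟩ := hG.exists_mem_of_dense (R := fun q => F.DecidesName q s)
    (ClassForcing.definableRel_decidesName.comp (.var ()) (.const hs)) fun r hr =>
      have ⟨q, hqr, hqs⟩ := hsdp.exists_le_decidesName hr hs
      ⟨q, hqs.1, hqr, hqs⟩
  obtain ⟨r, hr, hrp, hrq⟩ := hG.exists_le_le hp hq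
  exact ⟨r, hr, hrp, hqs.of_le (hG.mem_forcing hr) hrq⟩

theorem nameEval_eq_nameEval_starUpper (hG : IsGeneric 𝕄 F.P F.le G) (hq : q ∈ G)
    (h : F.DecidesName q s) : nameEval G s = nameEval (F.starUpper q) s := by
  obtain ⟨hqP, T, -, hT_trans, hsT, h_dec⟩ := h
  have h_iff : ∀ a ∈ T, (a ∈ G ↔ a ∈ F.starUpper q) := fun a haT => by
    refine ⟨fun ha => ⟨hqP, hG.mem_forcing ha, ?_⟩, fun ha => hG.starUpper_subset hq ha⟩
    exact (h_dec a haT (hG.mem_forcing ha)).resolve_right (not_not.2 (hG.compat hq ha))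
  refine nameEval_congr (K := {s | s ∈ T}) (fun s hs t p htp => ?_) s hsT
  obtain ⟨ht, hp⟩ := mem_and_mem_of_opair_mem hT_trans (hT_trans.subset_of_mem hs htp)
  exact ⟨ht, h_iff p hp⟩

theorem subset_MGen (hG : IsGeneric 𝕄 F.P F.le G) : 𝕄.M ⊆ MGen 𝕄 F.P G := fun x hx => by
  obtain ⟨σ, hσ, hσ_name, rfl⟩ :=
    exists_isName_singleton_nameEval_eq (ClassForcing.mem_model F.one_mem) x hx
  refine ⟨σ, hσ, hσ_name.mono (Set.singleton_subset_iff.2 F.one_mem), ?_⟩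
  refine nameEval_congr (K := {s | IsName {F.one} s}) (fun s hs t p htp => ?_) σ hσ_name
  obtain ⟨ht, rfl⟩ := IsName.of_opair_mem hs htp
  exact ⟨ht, iff_of_true hG.one_mem rfl⟩

theorem MGen_eq (hG : IsGeneric 𝕄 F.P F.le G) (hsdp : SetDecisionProperty 𝕄 F) :
    MGen 𝕄 F.P G = 𝕄.M := by
  refine subset_antisymm ?_ hG.subset_MGen
  rintro _ ⟨σ, hσ, -, rfl⟩
  obtain ⟨q, hq, -, hqσ⟩ := hG.exists_le_decidesName hsdp hG.one_mem hσ
  rw [hG.nameEval_eq_nameEval_starUpper hq hqσ]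
  exact nameEval_mem_model (ClassForcing.definableRel_mem_starUpper.comp
    (.const (ClassForcing.mem_model hqσ.1)) (.var ())) hσ

end IsGeneric

/-! ### The forcing relation -/

section ForcingRelation

variable {𝕄 : GBModel.{u}} {F : ClassForcing 𝕄} {G : Set ZFSet.{u}} {φ : EFormula} {m : ℕ}
  {p q : ZFSet.{u}} {σs : Fin m → ZFSet.{u}}

theorem listEncode_ofFn_mem (hσs : ∀ i, σs i ∈ 𝕄.M) : listEncode (List.ofFn σs) ∈ 𝕄.M :=
  (DefinableFun.listEncode fun i : Fin m => .var i).mem_model σs hσs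

theorem IsGeneric.sat_MGen_iff (hG : IsGeneric 𝕄 F.P F.le G) (hsdp : SetDecisionProperty 𝕄 F)
    (hq : q ∈ G) (h : F.DecidesName q (listEncode (List.ofFn σs))) :
    φ.Sat (MGen 𝕄 F.P G) (namesAssign G m σs) ↔
      φ.Sat 𝕄.M (namesAssign (F.starUpper q) m σs) := by
  have h_assign : namesAssign G m σs = namesAssign (F.starUpper q) m σs := funext fun n => by
    simp only [namesAssign, hG.nameEval_eq_nameEval_starUpper hq (h.of_listEncode _)]
  rw [hG.MGen_eq hsdp, h_assign]

theorem forces_iff (hsdp : SetDecisionProperty 𝕄 F) (hp : p ∈ F.P) (hσs : ∀ i, σs i ∈ 𝕄.M) :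
    Forces 𝕄 F φ m p σs ↔ ∀ q, F.le q p → F.DecidesName q (listEncode (List.ofFn σs)) →
      φ.Sat 𝕄.M (namesAssign (F.starUpper q) m σs) := by
  constructor
  · intro h q hqp hqσs
    obtain ⟨G, hG, hq⟩ := exists_isGeneric_mem hqσs.1
    exact (hG.sat_MGen_iff hsdp hq hqσs).1 (h G hG (hG.mem_of_le hq hp hqp))
  · intro h G hG hpG
    obtain ⟨q, hq, hqp, hqσs⟩ := hG.exists_le_decidesName hsdp hpG (listEncode_ofFn_mem hσs)
    exact (hG.sat_MGen_iff hsdp hq hqσs).2 (h q hqp hqσs)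

theorem exists_mem_forces (hsdp : SetDecisionProperty 𝕄 F) (hσs : ∀ i, σs i ∈ 𝕄.M)
    (hG : IsGeneric 𝕄 F.P F.le G) (h : φ.Sat (MGen 𝕄 F.P G) (namesAssign G m σs)) :
    ∃ p ∈ G, Forces 𝕄 F φ m p σs := by
  obtain ⟨q, hq, -, hqσs⟩ :=
    hG.exists_le_decidesName hsdp hG.one_mem (listEncode_ofFn_mem hσs)
  exact ⟨q, hq, fun G' hG' hq' => (hG'.sat_MGen_iff hsdp hq' hqσs).2
    ((hG.sat_MGen_iff hsdp hq hqσs).1 h)⟩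

theorem DefinableFun.namesAssign {α : Type} {H : ZFSet.{u} → Set ZFSet.{u}}
    {q : (α → ZFSet.{u}) → ZFSet.{u}} {t : Fin m → (α → ZFSet.{u}) → ZFSet.{u}}
    (hH : DefinableRel 𝕄 fun q p => p ∈ H q) (hq : DefinableFun 𝕄 q)
    (ht : ∀ i, DefinableFun 𝕄 (t i)) (n : ℕ) :
    DefinableFun 𝕄 fun v => CF.namesAssign (H (q v)) m (fun i => t i v) n := by
  by_cases hn : n < m
  · simpa only [CF.namesAssign, dif_pos hn] using .nameEval hH hq (ht ⟨n, hn⟩)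
  · simpa only [CF.namesAssign, dif_neg hn] using .const 𝕄.empty_mem

theorem definable_forces (hsdp : SetDecisionProperty 𝕄 F) (φ : EFormula) (m : ℕ) :
    Definable 𝕄 fun w : Option (Fin m) → ZFSet.{u} =>
      w none ∈ F.P ∧ Forces 𝕄 F φ m (w none) fun i => w (some i) := by
  have h_def : Definable 𝕄 fun w : Option (Fin m) → ZFSet.{u} => w none ∈ F.P ∧
      ∀ q ∈ F.P, (q ∈ F.P ∧ w none ∈ F.P ∧ F.le q (w none)) →
        F.DecidesName q (listEncode (List.ofFn fun i => w (some i))) →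
          φ.Sat 𝕄.M (namesAssign (F.starUpper q) m fun i => w (some i)) :=
    .and (.mem_class F.P_cls (.var none)) <| .forall_mem_class F.P_cls <|
      .imp (ClassForcing.definableRel_le.comp (.var none) (.var (some none))) <|
        .imp (ClassForcing.definableRel_decidesName.comp (.var none)
          (.listEncode fun i => .var (some (some i)))) <|
          .sat φ fun n => .namesAssign ClassForcing.definableRel_mem_starUpper (.var none)
            (fun i => .var (some (some i))) n
  refine h_def.congr fun w hw => and_congr_right fun hp => ?_
  rw [forces_iff hsdp hp fun i => hw (some i)]
  exact ⟨fun h q hqp hq => h q hq.1 ⟨hq.1, hp, hqp⟩ hq, fun h q _ hqp hq => h q hqp.2.2 hq⟩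

theorem setOf_forces_mem_Cls (hsdp : SetDecisionProperty 𝕄 F) (φ : EFormula) (m : ℕ) :
    {x | ∃ p ∈ F.P, ∃ σs : Fin m → ZFSet.{u}, (∀ i, σs i ∈ 𝕄.M ∧ IsName F.P (σs i)) ∧
      Forces 𝕄 F φ m p σs ∧ x = p.pair (listEncode (List.ofFn σs))} ∈ 𝕄.Cls := by
  have h_tuple : Definable 𝕄 fun w : Option Unit ⊕ Fin m → ZFSet.{u} =>
      (∀ i, IsName F.P (w (.inr i))) ∧
      (w (.inl none) ∈ F.P ∧ Forces 𝕄 F φ m (w (.inl none)) fun i => w (.inr i)) ∧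
      w (.inl (some ())) = (w (.inl none)).pair (listEncode (List.ofFn fun i => w (.inr i))) :=
    .and (.forall_fin fun i => (definablePred_isName F.P_cls).comp (.var (Sum.inr i))) <|
      .and ((definable_forces hsdp φ m).reindex fun o => o.elim (Sum.inl none) Sum.inr) <|
        .eq (.var (Sum.inl (some ())))
          (.opair (.var (Sum.inl none)) (.listEncode fun i => .var (Sum.inr i)))
  have h_def : DefinablePred 𝕄 fun x => ∃ p ∈ F.P, ∃ σs : Fin m → ZFSet.{u}, (∀ i, σs i ∈ 𝕄.M) ∧
      (∀ i, IsName F.P (σs i)) ∧ (p ∈ F.P ∧ Forces 𝕄 F φ m p σs) ∧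
        x = p.pair (listEncode (List.ofFn σs)) :=
    .exists_mem_class F.P_cls (.exists_tuple h_tuple)
  convert h_def.setOf_mem_Cls using 1
  ext x
  constructor
  · rintro ⟨p, hp, σs, hσs, h, rfl⟩
    exact ⟨GBModel.opair_mem (ClassForcing.mem_model hp) (listEncode_ofFn_mem fun i => (hσs i).1),
      p, hp, σs, fun i => (hσs i).1, fun i => (hσs i).2, ⟨hp, h⟩, rfl⟩
  · rintro ⟨-, p, hp, σs, hσs, h_name, ⟨-, h⟩, rfl⟩
    exact ⟨p, hp, σs, fun i => ⟨hσs i, h_name i⟩, h, rfl⟩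

end ForcingRelation

/-- If `ℙ` is a notion of class forcing for a countable transitive model
`𝕄 = ⟨M, 𝒞⟩` of `GB⁻` with the set decision property, then `ℙ` satisfies the forcing theorem
over `𝕄` and adds no new sets: `M[G] = M` for every `ℙ`-generic `G` over `𝕄`. -/
theorem set_decision_implies_forcing_theorem_and_no_new_sets
    (𝕄 : GBModel) (F : ClassForcing 𝕄) (hsdp : SetDecisionProperty 𝕄 F) :
    SatisfiesForcingTheorem 𝕄 F ∧
      ∀ G : Set ZFSet, IsGeneric 𝕄 F.P F.le G → MGen 𝕄 F.P G = 𝕄.M := by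
  refine ⟨fun φ m _ => ⟨setOf_forces_mem_Cls hsdp φ m, fun σs hσs G hG h => ?_⟩, fun G hG => ?_⟩
  · exact exists_mem_forces hsdp (fun i => (hσs i).1) hG h
  · exact hG.MGen_eq hsdp

end CF
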